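/- arXiv:1203.6504 — 3 statements merged into one kernel-verified Lean document; each statement's English description precedes it below -/
import Mathlib

section
/- Let n be a positive integer. There exist positive real constants c₁ and c₂ such that for all sufficiently large n, the number of isomorphism classes of kei of order n is at least 2^(c₁ n²), the number of isomorphism classes of kei of order n is at most the number of isomorphism classes of quandles of order n, which is at most the number of isomorphism classes of racks of order n, which is at most 2^(c₂ n²). -/
/-- A rack: right multiplications are bijections, and self-distributivity holds. -/
def IsRack {X : Type*} (op : X → X → X) : Prop :=
  (∀ y : X, Function.Bijective fun x => op x y) ∧
  ∀ x y z : X, op (op x y) z = op (op x z) (op y z)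

/-- A quandle is an idempotent rack. -/
def IsQuandle {X : Type*} (op : X → X → X) : Prop :=
  IsRack op ∧ ∀ x : X, op x x = x

/-- A kei is a quandle whose right multiplications are involutions. -/
def IsKei {X : Type*} (op : X → X → X) : Prop :=
  IsQuandle op ∧ ∀ x y : X, op (op x y) y = x

/-- Two binary operations on `X` are isomorphic as racks iff there is a bijection
intertwining them. -/
def RackIso {X : Type*} (op op' : X → X → X) : Prop :=
  ∃ θ : Equiv.Perm X, ∀ x y : X, θ (op x y) = op' (θ x) (θ y)

/-- The number of isomorphism classes of racks of order `n`. -/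
noncomputable def numRack (n : ℕ) : ℕ :=
  Nat.card (Quot fun op op' : {op : Fin n → Fin n → Fin n // IsRack op} =>
    RackIso op.1 op'.1)

/-- The number of isomorphism classes of quandles of order `n`. -/
noncomputable def numQuandle (n : ℕ) : ℕ :=
  Nat.card (Quot fun op op' : {op : Fin n → Fin n → Fin n // IsQuandle op} =>
    RackIso op.1 op'.1)

/-- The number of isomorphism classes of kei of order `n`. -/
noncomputable def numKei (n : ℕ) : ℕ :=
  Nat.card (Quot fun op op' : {op : Fin n → Fin n → Fin n // IsKei op} =>
    RackIso op.1 op'.1)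

/-!
**Lower bound.** A Boolean matrix `U` indexed by `I × J` gives a kei on `(I × Bool) ⊕ J`: the
point `j : J` flips the pair `{i} × Bool` when `U i j` is true, and nothing else moves. With `|I|`
and `|J|` proportional to `n` this gives `2 ^ (c n²)` kei on a set of order `n`, and an isomorphism
class contains at most `n! = 2 ^ (o(n²))` of them.

**Upper bound.** Let `H` be the group generated by the right translations by a set `S` of elements,
with `S` chosen so as to minimize the number of orbits of `H` plus `L |S|`, where `L ≈ log n`. Then
`|S| ≤ n / L`, which leaves `2 ^ (O(n²))` possibilities for `H`, and adding one more right
translation to `H` lowers the number of orbits by at most `L`. Hence each right translation maps all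
but `2 L` orbits into themselves, which leaves `2 ^ (O(n))` possibilities for its values at a set of
orbit representatives. Since `H` acts by automorphisms, these values, taken over all right
translations, determine the rack once `H` is known.
-/

open Set Function
open scoped Nat

/-! ### Isomorphism classes -/

section IsoClass

variable {X : Type*}

theorem rackIso_equivalence : Equivalence (RackIso : (X → X → X) → (X → X → X) → Prop) where
  refl _ := ⟨1, fun _ _ => rfl⟩
  symm := by
    rintro op op' ⟨θ, hθ⟩
    exact ⟨θ.symm, fun x y => by simp [Equiv.symm_apply_eq, hθ]⟩
  trans := by
    rintro op op' op'' ⟨θ, hθ⟩ ⟨η, hη⟩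
    exact ⟨θ.trans η, fun x y => by simp [hθ, hη]⟩

/-- The isomorphism classes of the binary operations satisfying `p`; `numRack n`, `numQuandle n`
and `numKei n` unfold to the cardinalities of such types. -/
abbrev IsoClass (p : (X → X → X) → Prop) : Type _ :=
  Quot fun op op' : {op // p op} => RackIso op.1 op'.1

theorem IsoClass.mk_eq_mk_iff {p : (X → X → X) → Prop} {op op' : {op // p op}} :
    (Quot.mk _ op : IsoClass p) = Quot.mk _ op' ↔ RackIso op.1 op'.1 :=
  (rackIso_equivalence.comap Subtype.val).quot_mk_eq_iff op op'

theorem card_isoClass_mono [Finite X] {p q : (X → X → X) → Prop} (hpq : ∀ op, p op → q op) :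
    Nat.card (IsoClass p) ≤ Nat.card (IsoClass q) := by
  refine Nat.card_le_card_of_injective (Quot.map (Subtype.map id hpq) fun _ _ h => h) ?_
  rintro ⟨op⟩ ⟨op'⟩ h
  exact IsoClass.mk_eq_mk_iff.2 (IsoClass.mk_eq_mk_iff (p := q).1 h)

theorem card_isoClass_le [Finite X] (p : (X → X → X) → Prop) :
    Nat.card (IsoClass p) ≤ {op | p op}.ncard :=
  Nat.card_le_card_of_surjective (Quot.mk _) Quot.mk_surjective

theorem ncard_le_card_isoClass_mul_factorial [Finite X] (p : (X → X → X) → Prop) :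
    {op | p op}.ncard ≤ Nat.card (IsoClass p) * (Nat.card X)! := by
  have isoToOut (op : {op // p op}) : RackIso op.1 (Quot.mk _ op : IsoClass p).out.1 :=
    IsoClass.mk_eq_mk_iff.1 (Quot.out_eq _).symm
  choose θ hθ using isoToOut
  rw [← Nat.card_perm, ← Nat.card_prod]
  refine Nat.card_le_card_of_injective
    (fun op : {op // p op} => ((Quot.mk _ op : IsoClass p), θ op)) fun op op' h => ?_
  obtain ⟨hclass, hθ_eq⟩ := Prod.mk.inj h
  ext x y : 3
  apply (θ op).injective
  rw [hθ op, hclass, hθ_eq, ← hθ op']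

end IsoClass

/-! ### Kei from Boolean matrices -/

section MatrixKei

variable {I J X Y : Type*}

theorem IsKei.conj {op : X → X → X} (h : IsKei op) (e : X ≃ Y) :
    IsKei (e.arrowCongr (e.arrowCongr e) op) := by
  obtain ⟨⟨⟨-, hdistrib⟩, hidem⟩, hinv⟩ := h
  have hinv' (x y : Y) : e (op (e.symm (e (op (e.symm x) (e.symm y)))) (e.symm y)) = x := by
    simp [hinv]
  refine ⟨⟨⟨fun y => Involutive.bijective fun x => hinv' x y, fun x y z => ?_⟩, fun x => ?_⟩, hinv'⟩
  · simpa [Equiv.arrowCongr] using hdistrib _ _ _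
  · simp [Equiv.arrowCongr, hidem]

/-- The kei encoding a Boolean matrix `U`: the point `j : J` exchanges `(i, false)` and `(i, true)`
when `U i j` is true, and fixes them otherwise; all other products are trivial. -/
def matrixKei (U : I → J → Bool) : (I × Bool) ⊕ J → (I × Bool) ⊕ J → (I × Bool) ⊕ J
  | .inl (i, b), .inr j => .inl (i, b ^^ U i j)
  | .inl a, .inl _ => .inl a
  | .inr j, _ => .inr j

theorem isKei_matrixKei (U : I → J → Bool) : IsKei (matrixKei U) := by
  have hinv (x y : (I × Bool) ⊕ J) : matrixKei U (matrixKei U x y) y = x := by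
    rcases x with ⟨i, b⟩ | j <;> rcases y with _ | j' <;> simp [matrixKei]
  refine ⟨⟨⟨fun y => Involutive.bijective fun x => hinv x y, ?_⟩, ?_⟩, hinv⟩
  · rintro (⟨i, b⟩ | j) (⟨i', b'⟩ | j') (_ | j'') <;>
      simp only [matrixKei, Bool.xor_right_comm]
  · rintro (⟨i, b⟩ | j) <;> rfl

theorem matrixKei_injective : Injective (matrixKei : (I → J → Bool) → _) := by
  intro U V h
  funext i j
  simpa [matrixKei] using congrFun₂ h (.inl (i, false)) (.inr j)

theorem two_pow_card_mul_card_le_ncard_isKei [Finite I] [Finite J]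
    (e : (I × Bool) ⊕ J ≃ X) :
    2 ^ (Nat.card I * Nat.card J) ≤ {op : X → X → X | IsKei op}.ncard := by
  have : Finite X := Finite.of_equiv _ e
  calc 2 ^ (Nat.card I * Nat.card J) = Nat.card (I → J → Bool) := by
        rw [Nat.card_fun, Nat.card_fun, Nat.card_eq_fintype_card (α := Bool), Fintype.card_bool,
          ← pow_mul, mul_comm]
    _ ≤ Nat.card {op : X → X → X // IsKei op} :=
        Nat.card_le_card_of_injective
          (fun U => ⟨e.arrowCongr (e.arrowCongr e) (matrixKei U), (isKei_matrixKei U).conj e⟩)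
          fun U V h => matrixKei_injective ((Equiv.injective _) (congrArg Subtype.val h))

end MatrixKei

/-! ### Orbits of a growing group -/

section Orbits

open MulAction

theorem ncard_setOf_exists_ne_map_eq_add_le {α β : Type*} [Finite α] {q : α → β}
    (hq : Surjective q) :
    {a | ∃ a' ≠ a, q a' = q a}.ncard + 2 * Nat.card β ≤ 2 * Nat.card α := by
  let s := surjInv hq
  have hs : LeftInverse q s := surjInv_eq hq
  have eq_of_mem_range {a : α} (ha : a ∈ range s) : s (q a) = a := by
    obtain ⟨b, rfl⟩ := ha
    rw [hs]
  have hsub : {a | ∃ a' ≠ a, q a' = q a} ⊆ (range s)ᶜ ∪ (s ∘ q) '' (range s)ᶜ := by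
    rintro a ⟨a', hne, hqa⟩
    by_cases ha : a ∈ range s
    · refine .inr ⟨a', fun ha' => hne ?_, ?_⟩
      · rw [← eq_of_mem_range ha', hqa, eq_of_mem_range ha]
      · rw [comp_apply, hqa, eq_of_mem_range ha]
    · exact .inl ha
  have hcompl : Nat.card β + (range s)ᶜ.ncard = Nat.card α := by
    rw [← ncard_add_ncard_compl (range s), ncard_range_of_injective hs.injective]
  have := (ncard_le_ncard hsub).trans (ncard_union_le _ _)
  have := ncard_image_le (f := s ∘ q) (range s)ᶜ.toFinite
  omega

variable {G X ι : Type*} [Group G] [MulAction G X]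

/-- The orbits of `H` whose chosen representative is sent to another orbit by `f`. -/
def movedOrbits (H : Subgroup G) (f : X → X) : Set (orbitRel.Quotient H X) :=
  {o | Quotient.mk'' (f o.out) ≠ o}

theorem ncard_movedOrbits_smul_add_le [Finite X] {H K : Subgroup G} (hHK : H ≤ K) {g : G}
    (hg : g ∈ K) :
    (movedOrbits H (g • · : X → X)).ncard + 2 * Nat.card (orbitRel.Quotient K X) ≤
      2 * Nat.card (orbitRel.Quotient H X) := by
  let q : orbitRel.Quotient H X → orbitRel.Quotient K X :=
    Quotient.map' id fun _ _ ⟨h, hh⟩ => ⟨⟨h, hHK h.2⟩, hh⟩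
  have hq : Surjective q := Quotient.ind fun x => ⟨Quotient.mk'' x, rfl⟩
  have hsub : movedOrbits H (g • · : X → X) ⊆ {o | ∃ o' ≠ o, q o' = q o} := by
    refine fun o ho => ⟨_, ho, ?_⟩
    have hout : q o = Quotient.mk'' o.out := congrArg q (Quotient.out_eq' o).symm
    rw [hout]
    exact Quotient.sound' ⟨⟨g, hg⟩, rfl⟩
  exact (Nat.add_le_add_right (ncard_le_ncard hsub) _).trans
    (ncard_setOf_exists_ne_map_eq_add_le hq)

theorem exists_finset_ncard_movedOrbits_le [Finite X] (t : ι → G) (L : ℕ) :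
    ∃ S : Finset ι, S.card * L ≤ Nat.card X ∧
      ∀ i, (movedOrbits (Subgroup.closure (t '' S)) (t i • · : X → X)).ncard ≤ 2 * L := by
  classical
  let orbits (S : Finset ι) : ℕ :=
    Nat.card (orbitRel.Quotient (Subgroup.closure (t '' (S : Set ι))) X)
  let cost (S : Finset ι) : ℕ := orbits S + S.card * L
  let S := argmin cost
  have hmin (T : Finset ι) : cost S ≤ cost T := argmin_le (f := cost) T
  refine ⟨S, ?_, fun i => ?_⟩
  · have hempty : cost ∅ = orbits ∅ := by simp [cost]
    have : orbits ∅ ≤ Nat.card X := Nat.card_le_card_of_surjective _ Quotient.mk''_surjective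
    have := hmin ∅
    lia
  · have hinsert : cost (insert i S) ≤ orbits (insert i S) + (S.card + 1) * L :=
      Nat.add_le_add_left (Nat.mul_le_mul_right L (Finset.card_insert_le i S)) _
    have hmoved : (movedOrbits (Subgroup.closure (t '' S)) (t i • · : X → X)).ncard +
        2 * orbits (insert i S) ≤ 2 * orbits S :=
      ncard_movedOrbits_smul_add_le
        (Subgroup.closure_mono <| image_mono <| Finset.coe_subset.2 <| Finset.subset_insert i S)
        (Subgroup.subset_closure <| mem_image_of_mem t <| Finset.mem_insert_self i S)
    have := hmin (insert i S)
    lia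

theorem exists_closure_range_eq_closure_image (t : ι → G) {S : Finset ι} {k : ℕ}
    (hS : S.card ≤ k) :
    ∃ f : Fin k → G, Subgroup.closure (range f) = Subgroup.closure (t '' S) := by
  obtain ⟨e⟩ : Nonempty (S ↪ Fin k) := Embedding.nonempty_of_card_le (by simpa)
  have hextend (s : S) : extend e (fun s => t s) 1 (e s) = t s := e.injective.extend_apply _ _ s
  refine ⟨extend e (fun s => t s) 1, le_antisymm ?_ (Subgroup.closure_mono ?_)⟩
  · rw [Subgroup.closure_le]
    rintro _ ⟨i, rfl⟩
    by_cases hi : ∃ s, e s = i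
    · obtain ⟨s, rfl⟩ := hi
      rw [hextend]
      exact Subgroup.subset_closure ⟨s, s.2, rfl⟩
    · rw [extend_apply' _ _ _ hi]
      exact one_mem _
  · rintro _ ⟨x, hx, rfl⟩
    exact ⟨e ⟨x, hx⟩, hextend ⟨x, hx⟩⟩

end Orbits

/-! ### Functions with few exceptional values -/

section FewExceptions

variable {ι α β : Type*}

theorem ncard_le_card_mul_of_subset_iUnion [Finite ι] [Finite α] {t : Set α} {s : ι → Set α}
    {c : ℕ} (ht : t ⊆ ⋃ i, s i) (hs : ∀ i, (s i).ncard ≤ c) : t.ncard ≤ Nat.card ι * c := by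
  have := Fintype.ofFinite ι
  calc t.ncard ≤ ∑ i, (s i).ncard := (ncard_le_ncard ht).trans (ncard_iUnion_le_of_fintype s)
    _ ≤ Finset.univ.card * c := Finset.sum_le_card_nsmul _ _ _ fun i _ => hs i
    _ = Nat.card ι * c := by rw [Finset.card_univ, Nat.card_eq_fintype_card]

theorem ncard_univ_pi [Fintype ι] (A : ι → Set α) : (univ.pi A).ncard = ∏ i, (A i).ncard := by
  simp_rw [← Nat.card_coe_set_eq, Nat.card_congr (Equiv.Set.univPi A), Nat.card_pi]

theorem ncard_setOf_ncard_notMem_le [Fintype ι] [Finite α] [Nonempty α] {A : ι → Set α}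
    (hA : ∀ i, (A i).Nonempty) (m : ℕ) :
    {f : ι → α | {i | f i ∉ A i}.ncard ≤ m}.ncard ≤
      2 ^ Nat.card ι * ((∏ i, (A i).ncard) * Nat.card α ^ m) := by
  classical
  let box (B : Finset ι) : Set (ι → α) := univ.pi fun i => if i ∈ B then univ else A i
  have hcover : {f : ι → α | {i | f i ∉ A i}.ncard ≤ m} ⊆
      ⋃ B : {B : Finset ι // B.card ≤ m}, box B := by
    intro f hf
    let B : Finset ι := Finset.univ.filter fun i => f i ∉ A i
    have hB : B.card ≤ m := by simpa [B, ← ncard_coe_finset] using hf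
    refine mem_iUnion.2 ⟨⟨B, hB⟩, fun i _ => ?_⟩
    by_cases hi : f i ∈ A i <;> simp [B, hi]
  have hbox (B : {B : Finset ι // B.card ≤ m}) :
      (box B).ncard ≤ (∏ i, (A i).ncard) * Nat.card α ^ m := by
    calc (box B).ncard ≤ ∏ i, (A i).ncard * if i ∈ B.1 then Nat.card α else 1 := by
          rw [ncard_univ_pi]
          refine Finset.prod_le_prod' fun i _ => ?_
          split_ifs
          · rw [ncard_univ]
            exact Nat.le_mul_of_pos_left _ ((ncard_pos).2 (hA i))
          · rw [mul_one]
      _ = (∏ i, (A i).ncard) * Nat.card α ^ B.1.card := by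
          rw [Finset.prod_mul_distrib, Fintype.prod_ite_mem, Finset.prod_const]
      _ ≤ (∏ i, (A i).ncard) * Nat.card α ^ m := by gcongr; exacts [Nat.card_pos, B.2]
  calc {f : ι → α | {i | f i ∉ A i}.ncard ≤ m}.ncard
      ≤ Nat.card {B : Finset ι // B.card ≤ m} * ((∏ i, (A i).ncard) * Nat.card α ^ m) :=
        ncard_le_card_mul_of_subset_iUnion hcover hbox
    _ ≤ 2 ^ Nat.card ι * ((∏ i, (A i).ncard) * Nat.card α ^ m) := by
        gcongr
        simpa using Fintype.card_subtype_le fun B : Finset ι => B.card ≤ m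

theorem prod_ncard_fiber_le_two_pow [Finite α] [Fintype β] (π : α → β) :
    ∏ b, (π ⁻¹' {b}).ncard ≤ 2 ^ Nat.card α := by
  calc ∏ b, (π ⁻¹' {b}).ncard ≤ ∏ b, 2 ^ (π ⁻¹' {b}).ncard :=
        Finset.prod_le_prod' fun _ _ => Nat.lt_two_pow_self.le
    _ = 2 ^ Nat.card α := by
        rw [Finset.prod_pow_eq_pow_sum, ← Nat.card_congr (Equiv.sigmaFiberEquiv π), Nat.card_sigma]
        rfl

theorem ncard_setOf_ncard_map_ne_le [Finite α] [Nonempty α] {π : α → β} (hπ : Surjective π)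
    (m : ℕ) :
    {d : β → α | {b | π (d b) ≠ b}.ncard ≤ m}.ncard ≤ 4 ^ Nat.card α * Nat.card α ^ m := by
  have := Finite.of_surjective π hπ
  have := Fintype.ofFinite β
  calc {d : β → α | {b | π (d b) ≠ b}.ncard ≤ m}.ncard
      ≤ 2 ^ Nat.card β * ((∏ b, (π ⁻¹' {b}).ncard) * Nat.card α ^ m) :=
        ncard_setOf_ncard_notMem_le (A := fun b => π ⁻¹' {b}) hπ m
    _ ≤ 2 ^ Nat.card α * (2 ^ Nat.card α * Nat.card α ^ m) := by
        gcongr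
        exacts [one_le_two, Nat.card_le_card_of_surjective π hπ, prod_ncard_fiber_le_two_pow π]
    _ = 4 ^ Nat.card α * Nat.card α ^ m := by rw [← mul_assoc, ← mul_pow]; norm_num

end FewExceptions

/-! ### Counting racks -/

section CountingRacks

variable {X : Type*} {op op' : X → X → X}

/-- The automorphisms of a binary operation, as a group of permutations. -/
def automorphismGroup (op : X → X → X) : Subgroup (Equiv.Perm X) where
  carrier := {g | ∀ x y, g (op x y) = op (g x) (g y)}
  one_mem' _ _ := rfl
  mul_mem' hg hh x y := by simp only [Equiv.Perm.mul_apply, hh x y, hg (_ : X) _]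
  inv_mem' hg x y := by rw [Equiv.Perm.inv_eq_iff_eq, hg]; simp

theorem mem_automorphismGroup {g : Equiv.Perm X} :
    g ∈ automorphismGroup op ↔ ∀ x y, g (op x y) = op (g x) (g y) :=
  Iff.rfl

/-- The right translation `x ↦ x ▷ y` of a rack, as a permutation. -/
noncomputable def IsRack.translation (h : IsRack op) (y : X) : Equiv.Perm X :=
  Equiv.ofBijective _ (h.1 y)

theorem IsRack.translation_mem_automorphismGroup (h : IsRack op) (y : X) :
    h.translation y ∈ automorphismGroup op :=
  fun x x' => h.2 x x' y

theorem eq_of_le_automorphismGroup_of_eq_out {H : Subgroup (Equiv.Perm X)}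
    (hop : H ≤ automorphismGroup op) (hop' : H ≤ automorphismGroup op')
    (hout : ∀ (o : MulAction.orbitRel.Quotient H X) y, op o.out y = op' o.out y) : op = op' := by
  funext x y
  obtain ⟨g, hg⟩ : ∃ g : H, g • (Quotient.mk'' x : MulAction.orbitRel.Quotient H X).out = x :=
    (MulAction.orbitRel H X).symm (Quotient.mk_out (s := MulAction.orbitRel H X) x)
  have map_op_inv {star : X → X → X} (hstar : H ≤ automorphismGroup star) (x : X) :
      g.1 (star x (g.1⁻¹ y)) = star (g.1 x) y := by
    simp [mem_automorphismGroup.1 (hstar g.2)]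
  rw [← hg, Subgroup.smul_def, Equiv.Perm.smul_def, ← map_op_inv hop, ← map_op_inv hop', hout]

/-- The binary operations invariant under `H` all of whose right translations move at most `m` of
the orbits of `H`. -/
def opsMovingFewOrbits (H : Subgroup (Equiv.Perm X)) (m : ℕ) : Set (X → X → X) :=
  {op | H ≤ automorphismGroup op ∧ ∀ y, (movedOrbits H (op · y)).ncard ≤ m}

theorem ncard_opsMovingFewOrbits_le [Finite X] [Nonempty X] (H : Subgroup (Equiv.Perm X)) (m : ℕ) :
    (opsMovingFewOrbits H m).ncard ≤ (4 ^ Nat.card X * Nat.card X ^ m) ^ Nat.card X := by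
  have := Fintype.ofFinite X
  let sections : Set (MulAction.orbitRel.Quotient H X → X) :=
    {d | {o | (Quotient.mk'' (d o) : MulAction.orbitRel.Quotient H X) ≠ o}.ncard ≤ m}
  calc (opsMovingFewOrbits H m).ncard
      ≤ (univ.pi fun _ : X => sections).ncard :=
        ncard_le_ncard_of_injOn (fun op y o => op o.out y) (fun op hop y _ => hop.2 y)
          fun op hop op' hop' h =>
            eq_of_le_automorphismGroup_of_eq_out hop.1 hop'.1 fun o y => congrFun₂ h y o
    _ = sections.ncard ^ Nat.card X := by simp [ncard_univ_pi]
    _ ≤ (4 ^ Nat.card X * Nat.card X ^ m) ^ Nat.card X := by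
        gcongr
        exact ncard_setOf_ncard_map_ne_le Quotient.mk''_surjective m

theorem IsRack.exists_mem_opsMovingFewOrbits [Finite X] (h : IsRack op) {L : ℕ} (hL : 0 < L) :
    ∃ f : Fin (Nat.card X / L) → Equiv.Perm X,
      op ∈ opsMovingFewOrbits (Subgroup.closure (range f)) (2 * L) := by
  obtain ⟨S, hS, hmoved⟩ := exists_finset_ncard_movedOrbits_le (X := X) h.translation L
  obtain ⟨f, hf⟩ :=
    exists_closure_range_eq_closure_image h.translation ((Nat.le_div_iff_mul_le hL).2 hS)
  refine ⟨f, ?_⟩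
  rw [hf]
  refine ⟨(Subgroup.closure_le _).2 ?_, hmoved⟩
  rintro _ ⟨y, -, rfl⟩
  exact h.translation_mem_automorphismGroup y

theorem ncard_isRack_le [Finite X] [Nonempty X] {L : ℕ} (hL : 0 < L) :
    {op : X → X → X | IsRack op}.ncard ≤ (Nat.card X)! ^ (Nat.card X / L) *
      (4 ^ Nat.card X * Nat.card X ^ (2 * L)) ^ Nat.card X := by
  let ops (f : Fin (Nat.card X / L) → Equiv.Perm X) : Set (X → X → X) :=
    opsMovingFewOrbits (Subgroup.closure (range f)) (2 * L)
  have hcover : {op : X → X → X | IsRack op} ⊆ ⋃ f, ops f :=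
    fun op hop => mem_iUnion.2 (hop.exists_mem_opsMovingFewOrbits hL)
  calc {op : X → X → X | IsRack op}.ncard
      ≤ Nat.card (Fin (Nat.card X / L) → Equiv.Perm X) *
          (4 ^ Nat.card X * Nat.card X ^ (2 * L)) ^ Nat.card X :=
        ncard_le_card_mul_of_subset_iUnion hcover fun f => ncard_opsMovingFewOrbits_le _ _
    _ = _ := by rw [Nat.card_fun, Nat.card_perm, Nat.card_fin]

end CountingRacks

/-! ### Asymptotics -/

section Asymptotics

theorem succ_sq_le_four_mul_two_pow (k : ℕ) : (k + 1) ^ 2 ≤ 4 * 2 ^ k := by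
  rcases Nat.lt_or_ge k 2 with hk | hk
  · interval_cases k <;> norm_num
  · induction k, hk using Nat.le_induction with
    | base => norm_num
    | succ k hk ih => rw [pow_succ 2]; nlinarith

theorem size_sq_le_four_mul (n : ℕ) : n.size ^ 2 ≤ 4 * n := by
  rcases hk : n.size with - | k
  · simp
  · have : 2 ^ k ≤ n := Nat.lt_size.1 (by lia)
    exact (succ_sq_le_four_mul_two_pow k).trans (by lia)

theorem factorial_le_two_pow_size_mul (n : ℕ) : n ! ≤ 2 ^ (n.size * n) :=
  calc n ! ≤ n ^ n := n.factorial_le_pow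
    _ ≤ (2 ^ n.size) ^ n := by gcongr; exact n.lt_size_self.le
    _ = 2 ^ (n.size * n) := (pow_mul _ _ _).symm

theorem numRack_le {n : ℕ} (hn : 0 < n) : numRack n ≤ 2 ^ (11 * n ^ 2) := by
  have : NeZero n := ⟨hn.ne'⟩
  have hgenerators : n ! ^ (n / n.size) ≤ 2 ^ n ^ 2 :=
    calc n ! ^ (n / n.size) ≤ (2 ^ (n.size * n)) ^ (n / n.size) := by
          gcongr; exact factorial_le_two_pow_size_mul n
      _ = 2 ^ (n * (n / n.size * n.size)) := by rw [← pow_mul]; ring_nf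
      _ ≤ 2 ^ n ^ 2 := by
          rw [sq]; gcongr; exacts [one_le_two, Nat.div_mul_le_self _ _]
  have hexceptions : n ^ (2 * n.size) ≤ 2 ^ (8 * n) :=
    calc n ^ (2 * n.size) ≤ (2 ^ n.size) ^ (2 * n.size) := by gcongr; exact n.lt_size_self.le
      _ = 2 ^ (2 * n.size ^ 2) := by rw [← pow_mul]; ring_nf
      _ ≤ 2 ^ (8 * n) := 
          Nat.pow_le_pow_right two_pos (by linarith [size_sq_le_four_mul n])
  calc numRack n ≤ {op : Fin n → Fin n → Fin n | IsRack op}.ncard := card_isoClass_le IsRack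
    _ ≤ n ! ^ (n / n.size) * (4 ^ n * n ^ (2 * n.size)) ^ n := by
        simpa using ncard_isRack_le (X := Fin n) (Nat.size_pos.2 hn)
    _ ≤ 2 ^ n ^ 2 * ((2 ^ 2) ^ n * 2 ^ (8 * n)) ^ n := by gcongr; norm_num
    _ = 2 ^ (11 * n ^ 2) := by simp only [← pow_mul, ← pow_add]; ring_nf

theorem two_pow_le_numKei_mul_factorial {m n : ℕ} (h : 2 * m ≤ n) :
    2 ^ (m * (n - 2 * m)) ≤ numKei n * n ! := by
  have e : (Fin m × Bool) ⊕ Fin (n - 2 * m) ≃ Fin n :=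
    Fintype.equivOfCardEq (by simp; lia)
  calc 2 ^ (m * (n - 2 * m)) ≤ {op : Fin n → Fin n → Fin n | IsKei op}.ncard := by
        simpa using two_pow_card_mul_card_le_ncard_isKei e
    _ ≤ numKei n * n ! := by
        simpa [numKei] using ncard_le_card_isoClass_mul_factorial (X := Fin n) IsKei

theorem two_rpow_sq_div_le_numKei {n : ℕ} (hn : 1600 ≤ n) :
    (2 : ℝ) ^ ((n : ℝ) ^ 2 / 20) ≤ numKei n := by
  have hfactorial : (n ! : ℝ) ≤ 2 ^ ((n : ℝ) ^ 2 / 20) := by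
    have hsize : 20 * n.size ≤ n := by nlinarith [size_sq_le_four_mul n]
    have hexponent : ((n.size * n : ℕ) : ℝ) ≤ (n : ℝ) ^ 2 / 20 := by
      rw [le_div_iff₀ (by norm_num)]
      exact_mod_cast (by nlinarith : n.size * n * 20 ≤ n ^ 2)
    calc (n ! : ℝ) ≤ 2 ^ (n.size * n) := mod_cast factorial_le_two_pow_size_mul n
      _ = (2 : ℝ) ^ ((n.size * n : ℕ) : ℝ) := (Real.rpow_natCast _ _).symm
      _ ≤ 2 ^ ((n : ℝ) ^ 2 / 20) := Real.rpow_le_rpow_of_exponent_le one_le_two hexponent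
  have hexponent : (n : ℝ) ^ 2 / 20 + (n : ℝ) ^ 2 / 20 ≤ (n / 4 * (n - 2 * (n / 4)) : ℕ) := by
    have hrows : n ≤ 5 * (n / 4) := by lia
    have hcols : n ≤ 2 * (n - 2 * (n / 4)) := by lia
    have : (n : ℝ) ^ 2 ≤ 10 * (n / 4 * (n - 2 * (n / 4)) : ℕ) := by
      exact_mod_cast (by nlinarith [Nat.mul_le_mul hrows hcols] :
        n ^ 2 ≤ 10 * (n / 4 * (n - 2 * (n / 4))))
    linarith
  refine le_of_mul_le_mul_right ?_ (by positivity : (0 : ℝ) < 2 ^ ((n : ℝ) ^ 2 / 20))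
  calc (2 : ℝ) ^ ((n : ℝ) ^ 2 / 20) * 2 ^ ((n : ℝ) ^ 2 / 20)
      = 2 ^ ((n : ℝ) ^ 2 / 20 + (n : ℝ) ^ 2 / 20) := (Real.rpow_add two_pos _ _).symm
    _ ≤ (2 : ℝ) ^ ((n / 4 * (n - 2 * (n / 4)) : ℕ) : ℝ) :=
        Real.rpow_le_rpow_of_exponent_le one_le_two hexponent
    _ = 2 ^ (n / 4 * (n - 2 * (n / 4))) := Real.rpow_natCast _ _
    _ ≤ numKei n * n ! := mod_cast two_pow_le_numKei_mul_factorial (by lia : 2 * (n / 4) ≤ n)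
    _ ≤ numKei n * 2 ^ ((n : ℝ) ^ 2 / 20) := by gcongr

end Asymptotics

theorem main_enumeration :
    ∃ c₁ c₂ : ℝ, 0 < c₁ ∧ 0 < c₂ ∧ ∃ N : ℕ, ∀ n : ℕ, N ≤ n →
      (2 : ℝ) ^ (c₁ * (n : ℝ) ^ 2) ≤ (numKei n : ℝ) ∧
      (numKei n : ℝ) ≤ (numQuandle n : ℝ) ∧
      (numQuandle n : ℝ) ≤ (numRack n : ℝ) ∧
      (numRack n : ℝ) ≤ (2 : ℝ) ^ (c₂ * (n : ℝ) ^ 2) := by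
  refine ⟨1 / 20, 11, by norm_num, by norm_num, 1600, fun n hn => ⟨?_, ?_, ?_, ?_⟩⟩
  · rw [one_div_mul_eq_div]
    exact two_rpow_sq_div_le_numKei hn
  · exact mod_cast card_isoClass_mono fun _ h => h.1
  · exact mod_cast card_isoClass_mono fun _ h => h.1
  · have hcast : (11 * (n : ℝ) ^ 2) = ((11 * n ^ 2 : ℕ) : ℝ) := by push_cast; rfl
    rw [hcast, Real.rpow_natCast]
    exact mod_cast numRack_le (by lia : 0 < n)
end

section
/- For every ε > 0 there exists N such that for all integers n ≥ N, the number of isomorphism classes of racks of order n is at most 2^((c + ε) n²), where c = (1/6)·log₂ 24 + (1/2)·log₂ 3. -/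
/-!
The argument follows Ashford and Riordan. View a rack as a directed graph with an edge
`x ⟶ op x w` of colour `w` for all `x` and `w`. A greedy choice gives a set `W` of `o(n)` colours
such that adding one more colour `y` merges few components of the graph coloured by `W`; hence each
right translation maps all but a few of these components into themselves. Since
`op (op a w) y = op (op a y) (op w y)`, right translation by `y` is determined on a component by its
value at one point, provided that for each colour `w` the point `op w y` and right translation by it
are known. The latter holds as soon as the columns in a set `T` of `o(n)` points are recorded:
a point with a small row contributes that row to `T`, while a point with a large row has a large
component in a second sparse graph, apart from `o(n)` exceptions. For the components that
stay in place, recording the set of images of their representatives costs only `n` bits per `y`.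
This gives at most `2 ^ ((1 + o(1)) n²)` rack operations, and `1 < c`.
-/

open Set Filter
open scoped Finset

section Counting

variable {A B : Type*}

theorem ncard_nontrivial_fiber_add_le [Finite A] {p : A → B} (hp : p.Surjective) :
    {a | ∃ a' ≠ a, p a' = p a}.ncard + 2 * Nat.card B ≤ 2 * Nat.card A := by
  classical
  have := Finite.of_surjective p hp
  cases nonempty_fintype A
  cases nonempty_fintype B
  set S : Finset A := {a | ∃ a' ≠ a, p a' = p a}
  have fiber_le (b : B) : #{a ∈ S | p a = b} + 2 ≤ 2 * #{a | p a = b} := by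
    obtain ⟨a, rfl⟩ := hp b
    have hsub : #{a' ∈ S | p a' = p a} ≤ #{a' | p a' = p a} :=
      Finset.card_le_card (Finset.filter_subset_filter _ S.subset_univ)
    rcases Finset.eq_empty_or_nonempty {a' ∈ S | p a' = p a} with hempty | ⟨a₁, ha₁⟩
    · have hpos : 0 < #{a' | p a' = p a} := Finset.card_pos.2 ⟨a, by simp⟩
      rw [hempty, Finset.card_empty]
      lia
    · obtain ⟨⟨a₂, hne, ha₂⟩, ha⟩ : (∃ a₂ ≠ a₁, p a₂ = p a₁) ∧ p a₁ = p a := by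
        simpa [S] using ha₁
      have htwo : 1 < #{a' | p a' = p a} :=
        Finset.one_lt_card.2 ⟨a₁, by simpa, a₂, by simp [ha₂, ha], hne.symm⟩
      lia
  have sum_fiber (R : Finset A) : ∑ b, #{a ∈ R | p a = b} = #R :=
    (Finset.card_eq_sum_card_fiberwise fun _ _ ↦ Finset.mem_coe.2 (Finset.mem_univ _)).symm
  calc {a | ∃ a' ≠ a, p a' = p a}.ncard + 2 * Nat.card B
      = ∑ b, (#{a ∈ S | p a = b} + 2) := by
        rw [Finset.sum_add_distrib, sum_fiber, ncard_eq_toFinset_card', toFinset_ofPred]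
        simp [S, mul_comm]
    _ ≤ ∑ b, 2 * #{a | p a = b} := Finset.sum_le_sum fun b _ ↦ fiber_le b
    _ = 2 * Nat.card A := by
        rw [← Finset.mul_sum, sum_fiber, Finset.card_univ, Nat.card_eq_fintype_card]

theorem ncard_large_fiber_mul_le [Finite A] [Finite B] (f : A → B) (s : ℕ) :
    {b | s ≤ (f ⁻¹' {b}).ncard}.ncard * s ≤ Nat.card A := by
  classical
  cases nonempty_fintype A
  cases nonempty_fintype B
  set C : Finset B := {b | s ≤ (f ⁻¹' {b}).ncard}
  have hC : s * #C ≤ #{a | f a ∈ C} := by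
    refine Finset.mul_card_image_le_card_of_maps_to (f := f) (by simp) s fun b hb ↦ ?_
    have hfiber : ({a ∈ {a | f a ∈ C} | f a = b} : Finset A) = (f ⁻¹' {b}).toFinset := by
      ext a
      simpa using fun h ↦ h ▸ hb
    rw [hfiber, ← ncard_eq_toFinset_card']
    exact (Finset.mem_filter.1 hb).2
  calc {b | s ≤ (f ⁻¹' {b}).ncard}.ncard * s = s * #C := by
        rw [ncard_eq_toFinset_card', toFinset_ofPred, mul_comm]
    _ ≤ Nat.card A := by
        rw [Nat.card_eq_fintype_card]
        exact hC.trans (Finset.card_le_univ _)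

theorem ncard_biUnion_le_mul [Finite A] {S : Set A} {f : A → Set B} {k : ℕ}
    (hf : ∀ a ∈ S, (f a).ncard ≤ k) : (⋃ a ∈ S, f a).ncard ≤ S.ncard * k := by
  lift S to Finset A using S.toFinite
  simp only [Finset.mem_coe, ncard_coe_finset] at hf ⊢
  exact (S.set_ncard_biUnion_le f).trans (S.sum_le_card_nsmul _ _ hf)

theorem exists_finset_forall_lt_insert_add [DecidableEq A] (f : Finset A → ℕ) {t : ℕ}
    (ht : 0 < t) : ∃ W : Finset A, #W * t + f W ≤ f ∅ ∧ ∀ y, f W < f (insert y W) + t := by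
  obtain ⟨W, hW, hmin⟩ := WellFounded.has_min (measure f).wf {W | #W * t + f W ≤ f ∅}
    ⟨∅, by simp⟩
  refine ⟨W, hW, fun y ↦ ?_⟩
  by_contra! hdrop
  have hinsert : #(insert y W) * t ≤ (#W + 1) * t :=
    Nat.mul_le_mul_right t (Finset.card_insert_le y W)
  have hmem : #(insert y W) * t + f (insert y W) ≤ f ∅ := by
    have : #W * t + f W ≤ f ∅ := hW
    lia
  exact hmin _ hmem (show f (insert y W) < f W by lia)

theorem exists_subset_range_of_ncard_le [Finite A] [Nonempty A] {S : Set A} {k : ℕ}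
    (hS : S.ncard ≤ k) : ∃ e : Fin k → A, S ⊆ range e := by
  let φ : S ↪ Fin k := (Finite.equivFin S).toEmbedding.trans (Fin.castLEEmb hS)
  exact ⟨Function.extend φ (↑) fun _ ↦ Classical.arbitrary A,
    fun x hx ↦ ⟨φ ⟨x, hx⟩, φ.injective.extend_apply _ _ _⟩⟩

end Counting

section Components

variable {X : Type*} {op op' : X → X → X} {W T : Set X} {x y : X}

/-- The partition of `X` into the (weak) components of the directed graph with edges
`x ⟶ op x w` for `w ∈ W`. -/
def componentSetoid (op : X → X → X) (W : Set X) : Setoid X :=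
  Relation.EqvGen.setoid fun x z ↦ ∃ w ∈ W, op x w = z

theorem componentSetoid_le_iff {s : Setoid X} :
    componentSetoid op W ≤ s ↔ ∀ x, ∀ w ∈ W, s x (op x w) :=
  ⟨fun hs _ w hw ↦ hs (.rel _ _ ⟨w, hw, rfl⟩),
    fun hs ↦ Setoid.eqvGen_le fun x _ ⟨w, hw, hxw⟩ ↦ hxw ▸ hs x w hw⟩

theorem componentSetoid_op (x : X) {w : X} (hw : w ∈ W) : componentSetoid op W x (op x w) :=
  componentSetoid_le_iff.1 le_rfl x w hw

theorem componentSetoid_mono (hWT : W ⊆ T) : componentSetoid op W ≤ componentSetoid op T :=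
  componentSetoid_le_iff.2 fun x _ hw ↦ componentSetoid_op x (hWT hw)

theorem componentSetoid_congr (h : ∀ w ∈ W, ∀ x, op x w = op' x w) :
    componentSetoid op W = componentSetoid op' W :=
  le_antisymm
    (componentSetoid_le_iff.2 fun x w hw ↦ h w hw x ▸ componentSetoid_op x hw)
    (componentSetoid_le_iff.2 fun x w hw ↦ h w hw x ▸ componentSetoid_op x hw)

/-- The component of `x` in the graph coloured by `W`, as a subset of `X`. -/
def component (op : X → X → X) (W : Set X) (x : X) : Set X :=
  {z | componentSetoid op W x z}

/-- The chosen representative of the component of `x`. -/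
noncomputable def componentRep (op : X → X → X) (W : Set X) (x : X) : X :=
  (Quotient.mk (componentSetoid op W) x).out

theorem componentSetoid_componentRep (x : X) :
    componentSetoid op W (componentRep op W x) x :=
  Quotient.mk_out x

theorem componentRep_congr (h : componentSetoid op W x y) :
    componentRep op W x = componentRep op W y :=
  congrArg Quotient.out (Quotient.sound h)

/-- The union of the components of the graph coloured by `T` that meet `T`; if `op` is a rack
operation, this is the subrack generated by `T`. -/
def translationHull (op : X → X → X) (T : Set X) : Set X :=
  {x | ∃ t ∈ T, componentSetoid op T t x}

theorem subset_translationHull : T ⊆ translationHull op T :=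
  fun t ht ↦ ⟨t, ht, Setoid.refl' _ t⟩

theorem translationHull_mono (hWT : W ⊆ T) : translationHull op W ⊆ translationHull op T :=
  fun _ ⟨w, hw, hwx⟩ ↦ ⟨w, hWT hw, componentSetoid_mono hWT hwx⟩

theorem mem_translationHull_of_componentRep_mem (hWT : W ⊆ T) (hx : componentRep op W x ∈ T) :
    x ∈ translationHull op T :=
  ⟨_, hx, componentSetoid_mono hWT (componentSetoid_componentRep x)⟩

/-- The components of the graph coloured by `W` that right translation by `y` does not map into
themselves. -/
def movedComponents (op : X → X → X) (W : Set X) (y : X) : Set (Quotient (componentSetoid op W)) :=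
  {c | ∃ x, Quotient.mk _ x = c ∧ ¬ componentSetoid op W x (op x y)}

/-- Each moved component is merged with another one when the colour `y` is added. -/
theorem ncard_movedComponents_add_le [Finite X] (op : X → X → X) (W : Set X) (y : X) :
    (movedComponents op W y).ncard + 2 * Nat.card (Quotient (componentSetoid op (insert y W))) ≤
      2 * Nat.card (Quotient (componentSetoid op W)) := by
  have hle := componentSetoid_mono (op := op) (subset_insert y W)
  let p : Quotient (componentSetoid op W) → Quotient (componentSetoid op (insert y W)) :=
    Quotient.map id hle
  have hp : p.Surjective := Quotient.ind fun x ↦ ⟨Quotient.mk _ x, rfl⟩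
  have hmoved : movedComponents op W y ⊆ {c | ∃ c' ≠ c, p c' = p c} := by
    rintro _ ⟨x, rfl, hx⟩
    refine ⟨Quotient.mk _ (op x y), fun h ↦ hx (Setoid.symm' _ (Quotient.exact h)), ?_⟩
    exact Quotient.sound (Setoid.symm' _ (componentSetoid_op x (mem_insert y W)))
  grw [ncard_le_ncard hmoved]
  exact ncard_nontrivial_fiber_add_le hp

theorem exists_forall_ncard_movedComponents_le [Finite X] (op : X → X → X) {t : ℕ} (ht : 0 < t) :
    ∃ W : Set X, W.ncard * t ≤ Nat.card X ∧ ∀ y, (movedComponents op W y).ncard ≤ 2 * t := by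
  classical
  obtain ⟨W, hW, hgreedy⟩ := exists_finset_forall_lt_insert_add
    (fun W : Finset X ↦ Nat.card (Quotient (componentSetoid op W))) ht
  have hempty : Nat.card (Quotient (componentSetoid op (∅ : Finset X))) ≤ Nat.card X :=
    Nat.card_le_card_of_surjective _ Quotient.mk_surjective
  refine ⟨W, by rw [ncard_coe_finset]; lia, fun y ↦ ?_⟩
  have hmoved := ncard_movedComponents_add_le op W y
  specialize hgreedy y
  rw [Finset.coe_insert] at hgreedy
  lia

theorem ncard_componentRep_image_large_mul_le [Finite X] (op : X → X → X) (W : Set X) (s : ℕ) :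
    (componentRep op W '' {x | s ≤ (component op W x).ncard}).ncard * s ≤ Nat.card X := by
  have hlarge : componentRep op W '' {x | s ≤ (component op W x).ncard} ⊆
      {r | s ≤ (componentRep op W ⁻¹' {r}).ncard} := by
    rintro _ ⟨x, hx, rfl⟩
    exact hx.trans (ncard_le_ncard fun z hz ↦ (componentRep_congr hz).symm)
  grw [ncard_le_ncard hlarge]
  exact ncard_large_fiber_mul_le _ s

theorem ncard_range_op_le [Finite X] (op : X → X → X) (W : Set X) (x : X) :
    (range (op x)).ncard ≤
      (component op W x).ncard + {y | ¬ componentSetoid op W x (op x y)}.ncard := by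
  have hcover : range (op x) ⊆
      component op W x ∪ op x '' {y | ¬ componentSetoid op W x (op x y)} := by
    rintro _ ⟨y, rfl⟩
    exact or_iff_not_imp_left.2 fun hy ↦ mem_image_of_mem _ hy
  calc (range (op x)).ncard
      ≤ (component op W x).ncard + (op x '' {y | ¬ componentSetoid op W x (op x y)}).ncard :=
        (ncard_le_ncard hcover).trans (ncard_union_le _ _)
    _ ≤ _ := Nat.add_le_add_left ncard_image_le _

theorem ncard_small_component_moved_le [Finite X] (op : X → X → X) (W : Set X) (s : ℕ) (y : X) :
    {x | (component op W x).ncard ≤ s ∧ ¬ componentSetoid op W x (op x y)}.ncard ≤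
      (movedComponents op W y).ncard * s := by
  let smallFiber (c : Quotient (componentSetoid op W)) : Set X :=
    {x | Quotient.mk _ x = c ∧ (component op W x).ncard ≤ s}
  have hcover : {x | (component op W x).ncard ≤ s ∧ ¬ componentSetoid op W x (op x y)} ⊆
      ⋃ c ∈ movedComponents op W y, smallFiber c :=
    fun x ⟨hsmall, hmoved⟩ ↦ mem_biUnion (x := Quotient.mk _ x) ⟨x, rfl, hmoved⟩ ⟨rfl, hsmall⟩
  refine (ncard_le_ncard hcover).trans (ncard_biUnion_le_mul fun c _ ↦ ?_)
  rcases (smallFiber c).eq_empty_or_nonempty with hempty | ⟨x, rfl, hsmall⟩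
  · simp [hempty]
  · exact (ncard_le_ncard fun z hz ↦ Quotient.exact hz.1.symm).trans hsmall

/-- Double counting of the pairs `(x, y)` for which `op x y` leaves the component of `x`. -/
theorem ncard_small_component_large_range_mul_le [Finite X] {s d k : ℕ}
    (hW : ∀ y, (movedComponents op W y).ncard ≤ k) :
    {x | (component op W x).ncard ≤ s ∧ s + d ≤ (range (op x)).ncard}.ncard * d ≤
      Nat.card X * (k * s) := by
  classical
  cases nonempty_fintype X
  rw [ncard_eq_toFinset_card', Nat.card_eq_fintype_card, ← Finset.card_univ]
  refine Finset.card_mul_le_card_mul (fun x y ↦ ¬ componentSetoid op W x (op x y))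
    (fun x hx ↦ ?_) fun y _ ↦ ?_
  · obtain ⟨hsmall, hrange⟩ := mem_toFinset.1 hx
    have hmoved := ncard_range_op_le op W x
    rw [ncard_eq_toFinset_card' {y | _}, toFinset_ofPred] at hmoved
    rw [Finset.bipartiteAbove]
    lia
  · calc #(Finset.bipartiteBelow _ _ y)
        ≤ {x | (component op W x).ncard ≤ s ∧ ¬ componentSetoid op W x (op x y)}.ncard := by
          rw [ncard_eq_toFinset_card']
          refine Finset.card_le_card fun x hx ↦ ?_
          obtain ⟨hx, hmoved⟩ := Finset.mem_filter.1 hx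
          exact mem_toFinset.2 ⟨(mem_toFinset.1 hx).1, hmoved⟩
      _ ≤ (movedComponents op W y).ncard * s := ncard_small_component_moved_le op W s y
      _ ≤ k * s := Nat.mul_le_mul_right s (hW y)

theorem exists_large_range_mem_translationHull [Finite X] (op : X → X → X) {m : ℕ} (hm : 0 < m) :
    ∃ T : Set X, T.ncard ≤ 3 * (Nat.card X / m) ∧
      ∀ x, 3 * m ^ 3 ≤ (range (op x)).ncard → x ∈ translationHull op T := by
  obtain ⟨V, hV, hmoved⟩ := exists_forall_ncard_movedComponents_le op hm
  let R : Set X := componentRep op V '' {x | m ≤ (component op V x).ncard}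
  let U : Set X := {x | (component op V x).ncard ≤ m ∧ m + 2 * m ^ 3 ≤ (range (op x)).ncard}
  have hVcard : V.ncard ≤ Nat.card X / m := (Nat.le_div_iff_mul_le hm).2 hV
  have hRcard : R.ncard ≤ Nat.card X / m :=
    (Nat.le_div_iff_mul_le hm).2 (ncard_componentRep_image_large_mul_le op V m)
  have hUcard : U.ncard ≤ Nat.card X / m := by
    have hcount : U.ncard * (2 * m ^ 3) ≤ Nat.card X * (2 * m * m) :=
      ncard_small_component_large_range_mul_le hmoved
    refine (Nat.le_div_iff_mul_le hm).2 (Nat.le_of_mul_le_mul_right ?_ (c := 2 * m ^ 2)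
      (by positivity))
    calc U.ncard * m * (2 * m ^ 2) = U.ncard * (2 * m ^ 3) := by ring
      _ ≤ Nat.card X * (2 * m * m) := hcount
      _ = Nat.card X * (2 * m ^ 2) := by ring
  refine ⟨V ∪ R ∪ U, ?_, fun x hx ↦ ?_⟩
  · have hunion := ncard_union_le (V ∪ R) U
    have hunion' := ncard_union_le V R
    lia
  · have hrange : m + 2 * m ^ 3 ≤ (range (op x)).ncard := by
      have : m ≤ m ^ 3 := Nat.le_self_pow (by norm_num) m
      lia
    rcases le_total m (component op V x).ncard with hlarge | hsmall
    · exact mem_translationHull_of_componentRep_mem (fun v hv ↦ .inl (.inl hv))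
        (.inl (.inr ⟨x, hlarge, rfl⟩))
    · exact subset_translationHull (.inr ⟨hsmall, hrange⟩)

end Components

namespace IsRack

variable {X : Type*} {op op' : X → X → X} {W T : Set X}

theorem ncard_range_op (h : IsRack op) (x z : X) :
    (range (op (op x z))).ncard = (range (op x)).ncard := by
  have himage : range (op (op x z)) = (fun u ↦ op u z) '' range (op x) := by
    rw [← range_comp, ← (h.1 z).surjective.range_comp]
    exact congrArg range (funext fun y ↦ (h.2 x y z).symm)
  rw [himage, ncard_image_of_injective _ (h.1 z).injective]

theorem exists_sparse_colours [Finite X] (h : IsRack op) {m : ℕ} (hm : 0 < m) :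
    ∃ W T : Set X, W ⊆ T ∧ (∀ w ∈ W, ∀ y, op w y ∈ translationHull op T) ∧
      W.ncard ≤ Nat.card X / m ∧ T.ncard ≤ 5 * (Nat.card X / m) ∧
      ∀ y, (movedComponents op W y).ncard ≤ 6 * m ^ 4 := by
  obtain ⟨W, hW, hmoved⟩ := exists_forall_ncard_movedComponents_le op (t := 3 * m ^ 4)
    (by positivity)
  obtain ⟨T, hT, hTlarge⟩ := exists_large_range_mem_translationHull op hm
  let M : Set X := ⋃ w ∈ {w ∈ W | (range (op w)).ncard ≤ 3 * m ^ 3}, range (op w)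
  have hWcard : W.ncard ≤ Nat.card X / m := by
    refine (Nat.le_div_iff_mul_le hm).2 (le_trans (Nat.mul_le_mul_left _ ?_) hW)
    have : m ≤ m ^ 4 := Nat.le_self_pow (by norm_num) m
    lia
  have hMcard : M.ncard ≤ Nat.card X / m := by
    refine (Nat.le_div_iff_mul_le hm).2 ?_
    calc M.ncard * m ≤ W.ncard * (3 * m ^ 3) * m := by
          gcongr
          refine (ncard_biUnion_le_mul fun w hw ↦ hw.2).trans ?_
          gcongr
          · exact W.toFinite
          · exact sep_subset W _
      _ = W.ncard * (3 * m ^ 4) := by ring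
      _ ≤ Nat.card X := hW
  refine ⟨W, W ∪ M ∪ T, fun w hw ↦ .inl (.inl hw), fun w hw y ↦ ?_, hWcard, ?_,
    fun y ↦ (hmoved y).trans_eq (by ring)⟩
  · rcases le_total (range (op w)).ncard (3 * m ^ 3) with hsmall | hlarge
    · exact subset_translationHull (.inl (.inr (mem_biUnion ⟨hw, hsmall⟩ (mem_range_self y))))
    · exact translationHull_mono subset_union_right (hTlarge _ (h.ncard_range_op w y ▸ hlarge))
  · have hunion := ncard_union_le (W ∪ M) T
    have hunion' := ncard_union_le W M
    lia

theorem eqOn_translationHull (h : IsRack op) (h' : IsRack op')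
    (hT : ∀ t ∈ T, ∀ x, op x t = op' x t) {y : X} (hy : y ∈ translationHull op T) (x : X) :
    op x y = op' x y := by
  have hstep (a t : X) (ht : t ∈ T) :
      (∀ x, op x a = op' x a) = ∀ x, op x (op a t) = op' x (op a t) := by
    have hiff (z : X) :
        op z a = op' z a ↔ op (op z t) (op a t) = op' (op z t) (op a t) := by
      rw [← h.2, hT t ht z, hT t ht a, ← h'.2, ← hT t ht (op' z a)]
      exact (h.1 t).injective.eq_iff.symm
    exact propext ((forall_congr' hiff).trans
      ((h.1 t).surjective.forall (p := fun u ↦ op u (op a t) = op' u (op a t))).symm)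
  have hker : componentSetoid op T ≤ Setoid.ker fun a ↦ ∀ x, op x a = op' x a :=
    componentSetoid_le_iff.2 hstep
  obtain ⟨t, ht, hty⟩ := hy
  exact (hker hty).mp (hT t ht) x

theorem op_op_eq_iff_of_agree (h : IsRack op) (h' : IsRack op') {w y : X}
    (hw : ∀ x, op x w = op' x w) (hwy : op w y = op' w y)
    (hcol : ∀ x, op x (op w y) = op' x (op w y)) (a : X) :
    op (op a w) y = op' (op a w) y ↔ op a y = op' a y := by
  rw [h.2, hw a, h'.2, ← hwy, ← hcol]
  exact (h.1 _).injective.eq_iff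

end IsRack

section Reconstruction

variable {X : Type*} {op op' : X → X → X} {W T : Set X}

/-- The points `x` at which the entry `op x y` has to be recorded separately: the colours in `W`,
and the representatives of the components that right translation by `y` does not preserve. -/
def exceptionalPoints (op : X → X → X) (W : Set X) (y : X) : Set X :=
  W ∪ Quotient.out '' movedComponents op W y

/-- The image under right translation by `y` of all component representatives that stay in their
component. One point in a component identifies the representative it comes from. -/
def stableImages (op : X → X → X) (W : Set X) (y : X) : Set X :=
  {z | op (componentRep op W z) y = z}

theorem ncard_exceptionalPoints_le [Finite X] (op : X → X → X) (W : Set X) (y : X) :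
    (exceptionalPoints op W y).ncard ≤ W.ncard + (movedComponents op W y).ncard :=
  (ncard_union_le _ _).trans (Nat.add_le_add_left ncard_image_le _)

theorem op_componentRep_eq (hW : ∀ w ∈ W, ∀ x, op x w = op' x w) {y : X}
    (hexc : ∀ x ∈ exceptionalPoints op W y, op x y = op' x y)
    (hstable : stableImages op W y = stableImages op' W y) (x : X) :
    op (componentRep op W x) y = op' (componentRep op W x) y := by
  have hrep : componentSetoid op W (componentRep op W x) x := componentSetoid_componentRep x
  by_cases hstays : componentSetoid op W (componentRep op W x) (op (componentRep op W x) y)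
  · have hz : componentRep op W (op (componentRep op W x) y) = componentRep op W x :=
      componentRep_congr (Setoid.trans' _ (Setoid.symm' _ hstays) hrep)
    have hmem : op (componentRep op W x) y ∈ stableImages op W y := by
      rw [stableImages, mem_ofPred_eq, hz]
    rw [hstable, stableImages, mem_ofPred_eq, componentRep, ← componentSetoid_congr hW] at hmem
    exact ((congrArg (op' · y) hz).symm.trans hmem).symm
  · exact hexc _ (.inr ⟨_, ⟨_, Quotient.sound hrep, hstays⟩, rfl⟩)

theorem IsRack.eq_of_agree (h : IsRack op) (h' : IsRack op') (hWT : W ⊆ T)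
    (hhull : ∀ w ∈ W, ∀ y, op w y ∈ translationHull op T)
    (hT : ∀ t ∈ T, ∀ x, op x t = op' x t)
    (hexc : ∀ y, ∀ x ∈ exceptionalPoints op W y, op x y = op' x y)
    (hstable : ∀ y, stableImages op W y = stableImages op' W y) : op = op' := by
  funext x y
  have hker : componentSetoid op W ≤ Setoid.ker fun a ↦ op a y = op' a y :=
    componentSetoid_le_iff.2 fun a w hw ↦ propext
      (h.op_op_eq_iff_of_agree h' (hT w (hWT hw)) (hexc y w (.inl hw))
        (h.eqOn_translationHull h' hT (hhull w hw y)) a).symm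
  exact (hker (componentSetoid_componentRep x)).mp
    (op_componentRep_eq (fun w hw ↦ hT w (hWT hw)) (hexc y) (hstable y) x)

end Reconstruction

section Enumeration

/-- The data recorded for a rack on `X`: the colours `W`, a list of `K` columns `(t, op · t)`, and,
for each `y`, the stable images together with a list of `k` entries `(x, op x y)`. -/
abbrev RackCode (X : Type*) (K k : ℕ) : Type _ :=
  Set X × (Fin K → X × (X → X)) × (X → Set X × (Fin k → X × X))

theorem card_isRack_le_card_rackCode (X : Type*) [Finite X] [Nonempty X] {m : ℕ} (hm : 0 < m) :
    Nat.card {op : X → X → X // IsRack op} ≤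
      Nat.card (RackCode X (5 * (Nat.card X / m)) (6 * m ^ 4 + Nat.card X / m)) := by
  have colours (r : {op : X → X → X // IsRack op}) := r.2.exists_sparse_colours hm
  choose W T hWT hhull hW hT hmoved using colours
  choose τ hτ using fun r ↦ exists_subset_range_of_ncard_le (hT r)
  choose e he using fun r y ↦ exists_subset_range_of_ncard_le (k := 6 * m ^ 4 + Nat.card X / m)
    ((ncard_exceptionalPoints_le r.1 (W r) y).trans
      ((add_le_add (hW r) (hmoved r y)).trans_eq (add_comm _ _)))
  let code (r : {op : X → X → X // IsRack op}) :
      RackCode X (5 * (Nat.card X / m)) (6 * m ^ 4 + Nat.card X / m) :=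
    (W r, fun i ↦ (τ r i, fun x ↦ r.1 x (τ r i)),
      fun y ↦ (stableImages r.1 (W r) y, fun i ↦ (e r y i, r.1 (e r y i) y)))
  refine Nat.card_le_card_of_injective code fun r r' hcode ↦ Subtype.ext ?_
  simp only [code, Prod.mk.injEq, funext_iff, forall_and] at hcode
  obtain ⟨hW, ⟨hτ_eq, hcolumn⟩, hstable, he_eq, hentry⟩ := hcode
  refine r.2.eq_of_agree r'.2 (hWT r) (hhull r) (fun t ht x ↦ ?_) (fun y x hx ↦ ?_) fun y ↦ ?_
  · obtain ⟨i, rfl⟩ := hτ r ht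
    rw [hcolumn, hτ_eq]
  · obtain ⟨i, rfl⟩ := he r y hx
    rw [hentry, he_eq]
  · rw [hstable, hW]

theorem card_rackCode (X : Type*) [Finite X] (K k : ℕ) :
    Nat.card (RackCode X K k) =
      2 ^ (Nat.card X + Nat.card X ^ 2) *
        Nat.card X ^ (K + Nat.card X * K + 2 * (Nat.card X * k)) := by
  have card_set : Nat.card (Set X) = 2 ^ Nat.card X := by
    rw [← ncard_univ, ← powerset_univ, ncard_powerset, ncard_univ]
  simp only [Nat.card_prod, Nat.card_fun, Nat.card_fin, card_set]
  ring

theorem eventually_exists_le_two_pow_and_pow_le {δ : ℝ} (hδ : 0 < δ) (p : ℕ) :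
    ∀ᶠ n : ℕ in atTop, ∃ l : ℕ, 0 < l ∧ n ≤ 2 ^ l ∧ 1 ≤ δ * l ∧ (l : ℝ) ^ p ≤ δ * n := by
  have hlinear : ∀ᶠ l : ℕ in atTop, 1 ≤ δ * l :=
    (tendsto_natCast_atTop_atTop.const_mul_atTop hδ).eventually_ge_atTop 1
  have hpow : ∀ᶠ l : ℕ in atTop, (l : ℝ) ^ p / 2 ^ l < δ / 2 :=
    (tendsto_pow_const_div_const_pow_of_one_lt p one_lt_two).eventually_lt_const (by positivity)
  have hlog : Tendsto (fun n ↦ Nat.log 2 n + 1) atTop atTop :=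
    tendsto_atTop_atTop.2 fun b ↦
      ⟨2 ^ b, fun n hn ↦ (Nat.le_log_of_pow_le one_lt_two hn).trans (Nat.le_succ _)⟩
  filter_upwards [hlog.eventually hlinear, hlog.eventually hpow, eventually_gt_atTop 0]
    with n hlinear hpow hpos
  refine ⟨Nat.log 2 n + 1, Nat.succ_pos _, (Nat.lt_pow_succ_log_self one_lt_two n).le, hlinear, ?_⟩
  have hn : (2 : ℝ) ^ Nat.log 2 n ≤ n := mod_cast Nat.pow_log_le_self 2 hpos.ne'
  calc ((Nat.log 2 n + 1 : ℕ) : ℝ) ^ p ≤ δ / 2 * 2 ^ (Nat.log 2 n + 1) :=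
        ((div_lt_iff₀ (by positivity)).1 hpow).le
    _ = δ * 2 ^ Nat.log 2 n := by ring
    _ ≤ δ * n := by gcongr

theorem code_length_le {δ : ℝ} {n l : ℕ} (hn : 0 < n) (hl : 0 < l) (hlinear : 1 ≤ δ * l)
    (hpow : (l : ℝ) ^ 9 ≤ δ * n) :
    ((n + n ^ 2 + l * (5 * (n / l ^ 2) + n * (5 * (n / l ^ 2)) +
      2 * (n * (6 * (l ^ 2) ^ 4 + n / l ^ 2))) : ℕ) : ℝ) ≤ (1 + 25 * δ) * n ^ 2 := by
  set q := n / l ^ 2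
  have hn_one : (1 : ℝ) ≤ n := mod_cast hn
  have hl_one : (1 : ℝ) ≤ l := mod_cast hl
  have hδ : 0 < δ := pos_of_mul_pos_left (one_pos.trans_le hlinear) (by positivity)
  have hql : (q * l : ℝ) ≤ δ * n := by
    have hq : (q * l ^ 2 : ℝ) ≤ n := mod_cast Nat.div_mul_le_self n (l ^ 2)
    calc (q * l : ℝ) ≤ q * l * (δ * l) := le_mul_of_one_le_right (by positivity) hlinear
      _ = δ * (q * l ^ 2) := by ring
      _ ≤ δ * n := by gcongr
  have hone : 1 ≤ δ * n := (one_le_pow₀ hl_one).trans hpow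
  calc ((n + n ^ 2 + l * (5 * q + n * (5 * q) + 2 * (n * (6 * (l ^ 2) ^ 4 + q))) : ℕ) : ℝ)
      = n ^ 2 + n * 1 + 5 * (1 * (q * l)) + 7 * (n * (q * l)) + 12 * (n * l ^ 9) := by
        push_cast; ring
    _ ≤ n ^ 2 + n * (δ * n) + 5 * (n * (δ * n)) + 7 * (n * (δ * n)) + 12 * (n * (δ * n)) := by
        gcongr
    _ = (1 + 25 * δ) * n ^ 2 := by ring

theorem rack_upper_bound_general (ε : ℝ) (hε : 0 < ε) :
    ∃ N : ℕ, ∀ (X : Type*) [Finite X], N ≤ Nat.card X →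
      (Nat.card {op : X → X → X // IsRack op} : ℝ) ≤ 2 ^ ((1 + ε) * (Nat.card X : ℝ) ^ 2) := by
  obtain ⟨N, hN⟩ := eventually_atTop.1 ((eventually_gt_atTop 0).and
    (eventually_exists_le_two_pow_and_pow_le (δ := ε / 25) (by positivity) 9))
  refine ⟨N, fun X _ hX ↦ ?_⟩
  obtain ⟨hpos, l, hl, hcard, hlinear, hpow⟩ := hN (Nat.card X) hX
  have : Nonempty X := (Nat.card_pos_iff.1 hpos).1
  set n := Nat.card X
  set K := 5 * (n / l ^ 2)
  set k := 6 * (l ^ 2) ^ 4 + n / l ^ 2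
  have hcount : Nat.card {op : X → X → X // IsRack op} ≤
      2 ^ (n + n ^ 2 + l * (K + n * K + 2 * (n * k))) := by
    calc Nat.card {op : X → X → X // IsRack op} ≤ Nat.card (RackCode X K k) :=
          card_isRack_le_card_rackCode X (by positivity)
      _ = 2 ^ (n + n ^ 2) * n ^ (K + n * K + 2 * (n * k)) := card_rackCode X K k
      _ ≤ 2 ^ (n + n ^ 2) * (2 ^ l) ^ (K + n * K + 2 * (n * k)) := by gcongr
      _ = _ := by rw [← pow_mul, ← pow_add]
  calc (Nat.card {op : X → X → X // IsRack op} : ℝ)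
      ≤ 2 ^ (n + n ^ 2 + l * (K + n * K + 2 * (n * k))) := mod_cast hcount
    _ = 2 ^ ((n + n ^ 2 + l * (K + n * K + 2 * (n * k)) : ℕ) : ℝ) := (Real.rpow_natCast _ _).symm
    _ ≤ 2 ^ ((1 + ε) * (n : ℝ) ^ 2) := by
        gcongr
        · exact one_le_two
        · exact (code_length_le hpos hl hlinear hpow).trans_eq (by ring)

theorem numRack_le_card_isRack (n : ℕ) :
    numRack n ≤ Nat.card {op : Fin n → Fin n → Fin n // IsRack op} :=
  Nat.card_le_card_of_surjective _ Quot.mk_surjective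

theorem one_le_rack_constant : (1 : ℝ) ≤ 1 / 6 * Real.logb 2 24 + 1 / 2 * Real.logb 2 3 := by
  have hlog24 : 4 ≤ Real.logb 2 24 := (Real.le_logb_iff_rpow_le one_lt_two (by norm_num)).2
    (by norm_num)
  have hlog3 : 1 ≤ Real.logb 2 3 := (Real.le_logb_iff_rpow_le one_lt_two (by norm_num)).2
    (by norm_num)
  linarith

end Enumeration

/-- The number of isomorphism classes of racks of order `n` is at most
`2 ^ ((c + ε) n²)` for all sufficiently large `n`, where
`c = (1/6) log₂ 24 + (1/2) log₂ 3`. -/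
theorem rack_upper_bound (ε : ℝ) (hε : 0 < ε) :
    ∃ N : ℕ, ∀ n : ℕ, N ≤ n →
      (numRack n : ℝ) ≤
        (2 : ℝ) ^ ((1 / 6 * Real.logb 2 24 + 1 / 2 * Real.logb 2 3 + ε) * (n : ℝ) ^ 2) := by
  obtain ⟨N, hN⟩ := rack_upper_bound_general ε hε
  refine ⟨N, fun n hn ↦ ?_⟩
  calc (numRack n : ℝ) ≤ Nat.card {op : Fin n → Fin n → Fin n // IsRack op} :=
        mod_cast numRack_le_card_isRack n
    _ ≤ 2 ^ ((1 + ε) * (n : ℝ) ^ 2) := by simpa using hN (Fin n) (by simpa using hn)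
    _ ≤ _ := by
        gcongr
        · exact one_le_two
        · exact one_le_rack_constant
end

section
/- (Pyber) For every ε > 0 there exists N such that for all integers n ≥ N, the number of subgroups of the symmetric group on n points is at most 24^((1/6 + ε) n²). -/
/-!
Fix `D`. Every subgroup of `Sₙ` is generated by a Sylow `p`-subgroup for each prime `p < D` together
with `R` elements that generate a subgroup of `D`-smooth index, so that `Sₙ` has at most
`(∏ p < D, #{p-subgroups}) * n! ^ R` subgroups.

A Sylow `p`-subgroup of `Sₙ` has order `p ^ a` with `a ≤ n / (p - 1)`, and a group of order `p ^ a`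
has at most `4 ^ a * p ^ (a ^ 2 / 4)` subgroups. The logarithm of the product is therefore
`n ^ 2 / 4 * ∑ p < D, log p / (p - 1) ^ 2` plus an error of order `D n log n`, and the sum is at
most `(2 / 3) log 24`.

The number `R` is bounded by induction on the degree, through orbits, blocks, and point stabilizers.
Only highly transitive groups resist this reduction: by a Miller-type theorem, proved with Sylow
subgroups and cycles of prime length instead of the classification of finite simple groups, they
contain the alternating group, and four elements suffice. With `D` about `n ^ (3 / 4)` and degree of
transitivity about `n ^ (1 / 2)`, both errors are `O(n ^ (7 / 4) log n)`.
-/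

section SmoothGeneration

open Subgroup

/-- A finite group is *smoothly generated* by `r` elements if some `r` of its elements generate a
subgroup whose index is `D`-smooth in the sense of `Nat.smoothNumbers`, i.e. has only prime factors
`< D`. The whole group is then generated by these elements and its Sylow subgroups for the primes
`< D`. -/
def IsSmoothlyGenerated (D r : ℕ) (G : Type*) [Group G] : Prop :=
  ∃ X : Finset G, X.card ≤ r ∧ (closure (X : Set G)).index ∈ D.smoothNumbers

variable {G G' : Type*} [Group G] [Group G'] {D r s : ℕ}

theorem IsSmoothlyGenerated.mono (h : IsSmoothlyGenerated D r G) (hrs : r ≤ s) :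
    IsSmoothlyGenerated D s G :=
  let ⟨X, hX, hsmooth⟩ := h
  ⟨X, hX.trans hrs, hsmooth⟩

theorem IsSmoothlyGenerated.of_card_mem_smoothNumbers (h : Nat.card G ∈ D.smoothNumbers) :
    IsSmoothlyGenerated D 0 G :=
  ⟨∅, by simp, by simpa using h⟩

/-- A Sylow `p`-subgroup of `K` is properly contained in one of `G`; take `y` in the difference. -/
theorem exists_index_sup_zpowers_mul_dvd [Finite G] (K : Subgroup G) {p : ℕ} (hp : p.Prime)
    (h : p ∣ K.index) : ∃ y : G, (K ⊔ zpowers y).index * p ∣ K.index := by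
  have : Fact p.Prime := ⟨hp⟩
  obtain ⟨S⟩ : Nonempty (Sylow p K) := inferInstance
  set Q : Subgroup G := S.map K.subtype
  have hQK : Q ≤ K := map_subtype_le _
  have hQrel : ¬ p ∣ Q.relIndex K := by
    rw [relIndex, subgroupOf, comap_map_eq_self_of_injective K.subtype_injective]
    exact S.not_dvd_index
  obtain ⟨P, hQP⟩ := (S.isPGroup'.map K.subtype).exists_le_sylow
  obtain ⟨y, hyP, hyQ⟩ : ∃ y ∈ P, y ∉ Q := by
    by_contra! hPQ
    exact P.not_dvd_index (h.trans (index_dvd_of_le (le_trans hPQ hQK)))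
  set R : Subgroup G := Q ⊔ zpowers y
  have hRP : R ≤ P := sup_le hQP (zpowers_le.2 hyP)
  have hp_dvd : p ∣ Q.relIndex R := by
    obtain ⟨k, hk⟩ := (P.isPGroup'.to_le hRP).index (Q.subgroupOf R)
    have hQR : Q.relIndex R ≠ 1 := fun h1 =>
      hyQ (relIndex_eq_one.1 h1 ((le_sup_right : zpowers y ≤ R) (mem_zpowers y)))
    rw [relIndex, hk] at hQR ⊢
    exact dvd_pow_self p (by rintro rfl; exact hQR (pow_zero p))
  have hp_rel : p ∣ K.relIndex (K ⊔ zpowers y) := by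
    refine (hp.dvd_mul.1 ?_).resolve_left hQrel
    rw [relIndex_mul_relIndex _ _ _ hQK le_sup_left,
      ← relIndex_mul_relIndex Q R _ le_sup_left (sup_le_sup_right hQK _)]
    exact hp_dvd.mul_right _
  refine ⟨y, ?_⟩
  rw [← relIndex_mul_index (le_sup_left : K ≤ K ⊔ zpowers y), mul_comm]
  exact mul_dvd_mul_right hp_rel _

/-- Each new generator divides `v` by a prime `p ≥ D`. -/
theorem exists_card_le_index_sup_closure_mem_smoothNumbers [Finite G] {u v k : ℕ} {K : Subgroup G}
    (hK : K.index ∣ u * v) (hu : u ∈ D.smoothNumbers) (hv : v ≠ 0) (hvD : v ≤ D ^ k) :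
    ∃ X : Finset G, X.card ≤ k ∧ (K ⊔ closure (X : Set G)).index ∈ D.smoothNumbers := by
  classical
  by_cases hs : K.index ∈ D.smoothNumbers
  · exact ⟨∅, by simp, by simpa using hs⟩
  obtain ⟨p, hp, hpK, hDp⟩ : ∃ p, p.Prime ∧ p ∣ K.index ∧ D ≤ p := by
    simpa only [Nat.mem_smoothNumbers', not_forall, not_lt, exists_prop] using hs
  have hpu : ¬ p ∣ u := fun h => (Nat.mem_smoothNumbers'.1 hu p hp h).not_ge hDp
  obtain ⟨w, rfl⟩ : p ∣ v := (hp.dvd_mul.1 (hpK.trans hK)).resolve_left hpu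
  obtain ⟨y, hy⟩ := exists_index_sup_zpowers_mul_dvd K hp hpK
  have hw : w ≠ 0 := right_ne_zero_of_mul hv
  have hDw : D * w ≤ D ^ k := (Nat.mul_le_mul_right w hDp).trans hvD
  cases k with
  | zero => nlinarith [hp.two_le, Nat.pos_of_ne_zero hw]
  | succ k =>
    have hD : 0 < D := by
      by_contra! h
      simp_all
    obtain ⟨X, hXk, hX⟩ := exists_card_le_index_sup_closure_mem_smoothNumbers
      (Nat.dvd_of_mul_dvd_mul_right hp.pos (hy.trans (hK.trans (by rw [mul_comm p, mul_assoc]))))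
      hu hw (Nat.le_of_mul_le_mul_left (hDw.trans_eq (pow_succ' D k)) hD)
    refine ⟨insert y X, (Finset.card_insert_le _ _).trans (by lia), ?_⟩
    rwa [Finset.coe_insert, Set.insert_eq, Subgroup.closure_union, ← zpowers_eq_closure,
      ← sup_assoc]

theorem IsSmoothlyGenerated.of_subgroup [Finite G] {H : Subgroup G} {u v k : ℕ}
    (h : IsSmoothlyGenerated D r H) (hH : H.index ∣ u * v) (hu : u ∈ D.smoothNumbers)
    (hv : v ≠ 0) (hvD : v ≤ D ^ k) : IsSmoothlyGenerated D (r + k) G := by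
  classical
  obtain ⟨X, hXr, hX⟩ := h
  have hK : ((closure (X : Set H)).map H.subtype).index ∣ (closure (X : Set H)).index * u * v := by
    rw [index_map_subtype, mul_assoc]
    exact mul_dvd_mul_left _ hH
  obtain ⟨Y, hYk, hY⟩ := exists_card_le_index_sup_closure_mem_smoothNumbers hK
    (Nat.mul_mem_smoothNumbers hX hu) hv hvD
  refine ⟨X.image H.subtype ∪ Y, (Finset.card_union_le _ _).trans
    (add_le_add (Finset.card_image_le.trans hXr) hYk), ?_⟩
  rwa [Finset.coe_union, Finset.coe_image, Subgroup.closure_union, ← MonoidHom.map_closure]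

theorem index_eq_relIndex_mul_index_sup [Finite G] (K N : Subgroup G) [N.Normal] :
    K.index = K.relIndex N * (K ⊔ N).index := by
  have hN : N.relIndex K * (K ⊔ N).index = N.index := by
    rw [← relIndex_sup_right K N, relIndex_mul_index le_sup_right]
  have hinf : K.relIndex N * N.index = N.relIndex K * K.index := by
    rw [← inf_relIndex_right K N, ← inf_relIndex_left K N, relIndex_mul_index inf_le_right,
      relIndex_mul_index inf_le_left]
  refine Nat.eq_of_mul_eq_mul_left (Nat.pos_of_ne_zero (N.subgroupOf K).index_ne_zero_of_finite) ?_
  rw [← relIndex, ← hinf, ← hN, mul_left_comm]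

theorem IsSmoothlyGenerated.of_range_of_ker [Finite G] (φ : G →* G')
    (hrange : IsSmoothlyGenerated D r φ.range) (hker : IsSmoothlyGenerated D s φ.ker) :
    IsSmoothlyGenerated D (r + s) G := by
  classical
  obtain ⟨X, hXr, hX⟩ := hrange
  obtain ⟨Y, hYs, hY⟩ := hker
  have hsurj := φ.rangeRestrict_surjective
  refine ⟨X.image (Function.surjInv hsurj) ∪ Y.image φ.ker.subtype,
    (Finset.card_union_le _ _).trans (add_le_add (Finset.card_image_le.trans hXr)
      (Finset.card_image_le.trans hYs)), ?_⟩
  rw [Finset.coe_union, Finset.coe_image, Finset.coe_image, Subgroup.closure_union,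
    ← MonoidHom.map_closure]
  set A := closure (Function.surjInv hsurj '' (X : Set φ.range))
  set B := (closure (Y : Set φ.ker)).map φ.ker.subtype
  have hA : closure (X : Set φ.range) ≤ (A ⊔ B).map φ.rangeRestrict := by
    have hAX : A.map φ.rangeRestrict = closure (X : Set φ.range) := by
      rw [MonoidHom.map_closure, ← Set.image_comp, (Function.rightInverse_surjInv hsurj).id,
        Set.image_id]
    exact hAX ▸ map_mono le_sup_left
  rw [index_eq_relIndex_mul_index_sup _ φ.ker]
  refine Nat.mul_mem_smoothNumbers (Nat.mem_smoothNumbers_of_dvd hY ?_)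
    (Nat.mem_smoothNumbers_of_dvd hX ?_)
  · exact index_dvd_of_le (map_le_iff_le_comap.1 le_sup_right)
  · rw [← φ.ker_rangeRestrict, ← comap_map_eq, index_comap_of_surjective _ hsurj]
    exact index_dvd_of_le hA

end SmoothGeneration

section PGroupOrbits

open Subgroup MulAction
open scoped Pointwise

variable {G Ω : Type*} [Group G] [MulAction G Ω] {p : ℕ}

theorem isPGroup_zpowers_of_pow_eq_one {g : G} {k : ℕ} (hg : g ^ p ^ k = 1) :
    IsPGroup p (zpowers g) := by
  rintro ⟨_, i, rfl⟩
  refine ⟨k, Subtype.ext ?_⟩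
  change (g ^ i) ^ p ^ k = 1
  rw [← zpow_natCast, zpow_comm, zpow_natCast, hg, one_zpow]

theorem le_fixingSubgroup_of_isPGroup (hp : p.Prime) {P : Subgroup G} (hP : IsPGroup p P)
    {B : Set Ω} (hBfin : B.Finite) (hB : P ≤ stabilizer G B) (hcard : B.ncard < p) :
    P ≤ fixingSubgroup G B := by
  have : Fact p.Prime := ⟨hp⟩
  intro g hg
  refine (mem_fixingSubgroup_iff G).2 fun x hx => ?_
  have horbit : orbit P x ⊆ B := by
    rintro _ ⟨h, rfl⟩
    exact (mem_stabilizer_set.1 (hB h.2) x).2 hx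
  have := (hBfin.subset horbit).to_subtype
  obtain ⟨n, hn⟩ := hP.card_orbit x
  have hn0 : n = 0 := by
    by_contra hn0
    have hlt := (Set.ncard_le_ncard horbit hBfin).trans_lt hcard
    rw [← Nat.card_coe_set_eq, hn] at hlt
    exact hlt.not_ge (Nat.le_self_pow hn0 p)
  rw [hn0, pow_zero] at hn
  have := (Nat.card_eq_one_iff_unique.1 hn).1
  exact congrArg Subtype.val (Subsingleton.elim
    (⟨g • x, mem_orbit x (⟨g, hg⟩ : P)⟩ : orbit P x) ⟨x, mem_orbit_self x⟩)

theorem le_stabilizer_orbit (P : Subgroup G) (x : Ω) : P ≤ stabilizer G (orbit P x) :=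
  fun g hg => smul_orbit (⟨g, hg⟩ : P) x

theorem le_stabilizer_or_le_ncard_orbit [Finite Ω] (hp : p.Prime) {P : Subgroup G}
    (hP : IsPGroup p P) (x : Ω) : P ≤ stabilizer G x ∨ p ≤ (orbit P x).ncard := by
  refine or_iff_not_imp_right.2 fun hlt g hg => ?_
  exact (mem_fixingSubgroup_iff G).1 (le_fixingSubgroup_of_isPGroup hp hP (Set.toFinite _)
    (le_stabilizer_orbit P x) (not_le.1 hlt) hg) x (mem_orbit_self x)

end PGroupOrbits

section LargePrimes

open Subgroup MulAction
open scoped Pointwise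

/-- The subgroup of `A` generated by the elements of `A` whose order is a power of a prime `≥ D`:
the smallest subgroup of `A` containing all Sylow subgroups of `A` for such primes. -/
def largePrimeCore {G : Type*} [Group G] (D : ℕ) (A : Subgroup G) : Subgroup G :=
  closure {g | g ∈ A ∧ ∃ p k : ℕ, p.Prime ∧ D ≤ p ∧ g ^ p ^ k = 1}

/-- No element of prime order `≥ D` acts trivially. This weakening of `FaithfulSMul` survives the
passage from a permutation action to the action on the cosets of a suitable subgroup. -/
def FaithfulOnLargePrimes (D : ℕ) (G Ω : Type*) [Group G] [MulAction G Ω] : Prop :=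
  ∀ g : G, (orderOf g).Prime → D ≤ orderOf g → ∃ x : Ω, g • x ≠ x

variable {G Ω : Type*} [Group G] [MulAction G Ω] {D : ℕ} {A : Subgroup G}

theorem largePrimeCore_le : largePrimeCore D A ≤ A :=
  (closure_le _).2 fun _ h => h.1

theorem relIndex_largePrimeCore_mem_smoothNumbers [Finite G] :
    (largePrimeCore D A).relIndex A ∈ D.smoothNumbers := by
  refine Nat.mem_smoothNumbers'.2 fun p hp hdvd => ?_
  by_contra! hDp
  have : Fact p.Prime := ⟨hp⟩
  obtain ⟨P⟩ : Nonempty (Sylow p A) := inferInstance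
  refine P.not_dvd_index (hdvd.trans (index_dvd_of_le fun g hg => subset_closure ⟨g.2, p, ?_⟩))
  obtain ⟨k, hk⟩ := P.2 ⟨g, hg⟩
  exact ⟨k, hp, hDp, congrArg (fun x : P => ((x : A) : G)) hk⟩

theorem largePrimeCore_le_stabilizer_or_le_ncard_orbit [Finite Ω] (x : Ω) :
    largePrimeCore D A ≤ stabilizer G x ∨ D ≤ (orbit (largePrimeCore D A) x).ncard := by
  refine or_iff_not_imp_left.2 fun hmoved => ?_
  obtain ⟨g, ⟨hgA, p, k, hp, hDp, hgp⟩, hgx⟩ := Set.not_subset.1 ((closure_le _).not.1 hmoved)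
  have hcore : zpowers g ≤ largePrimeCore D A :=
    zpowers_le.2 (subset_closure ⟨hgA, p, k, hp, hDp, hgp⟩)
  have horbit : orbit (zpowers g) x ⊆ orbit (largePrimeCore D A) x := by
    rintro _ ⟨h, rfl⟩
    exact ⟨⟨h, hcore h.2⟩, rfl⟩
  rcases le_stabilizer_or_le_ncard_orbit hp (isPGroup_zpowers_of_pow_eq_one hgp) x with h | h
  · exact absurd (h (mem_zpowers g)) hgx
  · exact hDp.trans (h.trans (Set.ncard_le_ncard horbit))

theorem card_mem_smoothNumbers_of_forall_orderOf [Finite G]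
    (h : ∀ g : G, (orderOf g).Prime → orderOf g < D) : Nat.card G ∈ D.smoothNumbers := by
  refine Nat.mem_smoothNumbers'.2 fun p hp hdvd => ?_
  have : Fact p.Prime := ⟨hp⟩
  obtain ⟨g, rfl⟩ := exists_prime_orderOf_dvd_card' p hdvd
  exact h g hp

namespace FaithfulOnLargePrimes

protected theorem subgroup (h : FaithfulOnLargePrimes D G Ω) (H : Subgroup G) :
    FaithfulOnLargePrimes D H Ω := fun g hg hD => by
  rw [← Subgroup.orderOf_coe] at hg hD
  exact h g hg hD

theorem of_faithfulSMul [FaithfulSMul G Ω] : FaithfulOnLargePrimes D G Ω := fun g hg _ => by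
  by_contra! hfix
  rw [eq_of_smul_eq_smul (α := Ω) fun x => (hfix x).trans (one_smul G x).symm, orderOf_one] at hg
  exact Nat.not_prime_one hg

theorem card_ker_mem_smoothNumbers [Finite G] (h : FaithfulOnLargePrimes D G Ω) :
    Nat.card (toPermHom G Ω).ker ∈ D.smoothNumbers := by
  refine card_mem_smoothNumbers_of_forall_orderOf fun g hg => ?_
  by_contra! hD
  obtain ⟨x, hx⟩ := h.subgroup _ g hg hD
  exact hx (Equiv.congr_fun (MonoidHom.mem_ker.1 g.2) x)

theorem card_mem_smoothNumbers_or_exists_not_le_stabilizer [Finite G]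
    (h : FaithfulOnLargePrimes D G Ω) (A : Subgroup G) :
    Nat.card A ∈ D.smoothNumbers ∨ ∃ x : Ω, ¬ largePrimeCore D A ≤ stabilizer G x := by
  refine or_iff_not_imp_right.2 fun hfix => card_mem_smoothNumbers_of_forall_orderOf fun g hg => ?_
  by_contra! hD
  push Not at hfix
  obtain ⟨x, hx⟩ := h.subgroup A g hg hD
  refine hx (hfix x (subset_closure ⟨g.2, orderOf g, 1, hg, hD, ?_⟩))
  rw [pow_one, ← Subgroup.orderOf_coe, pow_orderOf_eq_one]

end FaithfulOnLargePrimes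

/-- Every finite group with an action on `m` points that is faithful on elements of prime order
`≥ D` is smoothly generated by `r` elements. -/
def GeneratedInDegree.{u} (D m r : ℕ) : Prop :=
  ∀ (G Ω : Type u) [Group G] [Finite G] [MulAction G Ω] [Finite Ω], Nat.card Ω = m →
    FaithfulOnLargePrimes D G Ω → IsSmoothlyGenerated D r G

theorem IsSmoothlyGenerated.of_orbit.{u} {G Ω : Type u} [Group G] [Finite G] [MulAction G Ω]
    [Finite Ω] {r s : ℕ} (hG : FaithfulOnLargePrimes D G Ω) (x : Ω)
    (hr : GeneratedInDegree.{u} D (orbit G x).ncard r)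
    (hs : GeneratedInDegree.{u} D (orbit G x)ᶜ.ncard s) : IsSmoothlyGenerated D (r + s) G := by
  refine .of_range_of_ker (toPermHom G (orbit G x))
    (hr _ (orbit G x) (Nat.card_coe_set_eq _) .of_faithfulSMul) ?_
  let C : SubMulAction G Ω :=
    { carrier := (orbit G x)ᶜ
      smul_mem' := fun g y hy hgy => hy (by simpa using mem_orbit_of_mem_orbit g⁻¹ hgy) }
  refine hs _ C (Nat.card_coe_set_eq _) fun g hg hD => ?_
  obtain ⟨y, hy⟩ := hG.subgroup _ g hg hD
  have hyC : y ∉ orbit G x := fun hyx =>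
    hy (congrArg Subtype.val (Equiv.congr_fun (MonoidHom.mem_ker.1 g.2) ⟨y, hyx⟩))
  exact ⟨⟨y, hyC⟩, fun h => hy (congrArg Subtype.val h)⟩

theorem conj_mem_largePrimeCore {a g : G} (ha : ∀ g ∈ largePrimeCore D A, a * g * a⁻¹ ∈ A)
    (hg : g ∈ largePrimeCore D A) : a * g * a⁻¹ ∈ largePrimeCore D A := by
  suffices h : largePrimeCore D A ≤ (largePrimeCore D A).comap (MulAut.conj a).toMonoidHom from
    h hg
  refine (closure_le _).2 fun g hg => subset_closure ⟨ha g (subset_closure hg), ?_⟩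
  obtain ⟨-, p, k, hp, hDp, hgp⟩ := hg
  exact ⟨p, k, hp, hDp, by rw [← map_pow, hgp, map_one]⟩

theorem normalizer_le_stabilizer_fixedPoints (H : Subgroup G) :
    normalizer (H : Set G) ≤ stabilizer G (fixedPoints H Ω) := by
  have hmaps : ∀ g ∈ normalizer (H : Set G), ∀ x ∈ fixedPoints H Ω, g • x ∈ fixedPoints H Ω := by
    rintro g hg x hx ⟨h, hh⟩
    have := hx ⟨g⁻¹ * h * g, (mem_normalizer_iff''.1 hg h).1 hh⟩
    change (g⁻¹ * h * g) • x = x at this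
    change h • g • x = g • x
    rwa [mul_smul, mul_smul, inv_smul_eq_iff] at this
  refine fun g hg => mem_stabilizer_set.2 fun x => ⟨fun hx => ?_, hmaps g hg x⟩
  simpa using hmaps g⁻¹ (inv_mem hg) _ hx

/-- If the core of a point stabilizer fixes a second point, its normalizer properly contains the
stabilizer. -/
theorem two_mul_index_normalizer_le [Finite G] [IsPretransitive G Ω] {α z : Ω}
    (hz : z ≠ α) (hfix : largePrimeCore D (stabilizer G α) ≤ stabilizer G z) :
    2 * (normalizer (largePrimeCore D (stabilizer G α) : Set G)).index ≤ Nat.card Ω := by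
  set O := largePrimeCore D (stabilizer G α)
  set N := normalizer (O : Set G)
  have mem_N : ∀ a : G, (∀ g ∈ O, a * g * a⁻¹ ∈ stabilizer G α) → a ∈ N := fun a ha =>
    mem_normalizer_fintype fun _ hg => conj_mem_largePrimeCore ha hg
  have hAN : stabilizer G α ≤ N := fun a ha =>
    mem_N a fun g hg => mul_mem (mul_mem ha (largePrimeCore_le hg)) (inv_mem ha)
  obtain ⟨b, rfl⟩ := exists_smul_eq G z α
  have hbN : b ∈ N := mem_N b fun g hg => by
    rw [mem_stabilizer_iff, mul_smul, mul_smul, inv_smul_smul, hfix hg]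
  have hrel_ne_one : (stabilizer G (b • z)).relIndex N ≠ 1 := fun h =>
    hz (MulAction.injective b (relIndex_eq_one.1 h hbN)).symm
  have hrel_ne_zero : (stabilizer G (b • z)).relIndex N ≠ 0 := index_ne_zero_of_finite
  calc 2 * N.index ≤ (stabilizer G (b • z)).relIndex N * N.index :=
        Nat.mul_le_mul_right _ (by lia)
    _ = Nat.card Ω := by rw [relIndex_mul_index hAN, index_stabilizer_of_transitive]

/-- An element acting trivially on the cosets of the normalizer permutes the few fixed points of
the core, so if its order is a large prime it fixes them all. -/
theorem FaithfulOnLargePrimes.quotient_normalizer [Finite Ω] [IsPretransitive G Ω]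
    (hG : FaithfulOnLargePrimes D G Ω) {α : Ω}
    (hfew : (fixedPoints (largePrimeCore D (stabilizer G α)) Ω).ncard < D) :
    FaithfulOnLargePrimes D G (G ⧸ normalizer (largePrimeCore D (stabilizer G α) : Set G)) := by
  set O := largePrimeCore D (stabilizer G α)
  intro g hg hD
  by_contra! htriv
  obtain ⟨y, hy⟩ := hG g hg hD
  obtain ⟨a, rfl⟩ := exists_smul_eq G α y
  have hmem : a⁻¹ * g * a ∈ normalizer (O : Set G) := by
    have := htriv (a : G ⧸ normalizer (O : Set G))
    rw [Quotient.smul_mk, smul_eq_mul, eq_comm, QuotientGroup.eq] at this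
    rwa [mul_assoc]
  have hpow : (a⁻¹ * g * a) ^ orderOf g ^ 1 = 1 := by
    have := conj_pow (i := orderOf g) (a := a⁻¹) (b := g)
    rw [inv_inv] at this
    rw [pow_one, this, pow_orderOf_eq_one, mul_one, inv_mul_cancel]
  have hfix := le_fixingSubgroup_of_isPGroup hg (isPGroup_zpowers_of_pow_eq_one hpow)
    (Set.toFinite (fixedPoints O Ω))
    (zpowers_le.2 (normalizer_le_stabilizer_fixedPoints O hmem)) (hfew.trans_le hD)
  have hα : (a⁻¹ * g * a) • α = α := (mem_fixingSubgroup_iff G).1 (hfix (mem_zpowers _)) α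
    fun h => largePrimeCore_le h.2
  rw [mul_smul, mul_smul, inv_smul_eq_iff] at hα
  exact hy hα

end LargePrimes

section GeneratorBound

open Subgroup MulAction

/-- The number of generators needed, up to `D`-smooth index, by a group acting on `m` points when
`T`-transitive actions can be dealt with directly. It is superadditive up to the defects recorded
in the lemmas below; the truncated subtraction makes it vanish for `m < D`. -/
def generatorBound (D T m : ℕ) : ℕ :=
  2 * T * (2 * m / D - 1)

variable {D T a b m : ℕ}

theorem generatorBound_mono (h : a ≤ b) : generatorBound D T a ≤ generatorBound D T b := by
  unfold generatorBound
  gcongr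

theorem generatorBound_mul_le : generatorBound D T m * D ≤ 4 * T * m :=
  calc 2 * T * (2 * m / D - 1) * D ≤ 2 * T * (2 * m / D) * D := by gcongr; exact Nat.sub_le _ 1
    _ = 2 * T * (2 * m / D * D) := mul_assoc _ _ _
    _ ≤ 2 * T * (2 * m) := Nat.mul_le_mul_left _ (Nat.div_mul_le_self _ _)
    _ = 4 * T * m := by ring

theorem two_mul_le_generatorBound (hD : 0 < D) (hm : D ≤ m) : 2 * T ≤ generatorBound D T m := by
  have : 2 ≤ 2 * m / D := (Nat.le_div_iff_mul_le hD).2 (by lia)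
  exact Nat.le_mul_of_pos_right _ (by lia)

theorem generatorBound_add_le (hD : 0 < D) (ha : D ≤ a) :
    generatorBound D T a + generatorBound D T b ≤ generatorBound D T (a + b) := by
  have ha1 : 1 ≤ 2 * a / D := (Nat.le_div_iff_mul_le hD).2 (by lia)
  have hadd := Nat.div_add_div_le_add_div (x := 2 * a) (y := 2 * b) (z := D)
  rw [← mul_add] at hadd
  rw [generatorBound, generatorBound, ← mul_add]
  exact Nat.mul_le_mul_left _ (by lia)

theorem generatorBound_add_add_le (hD : 0 < D) (ha : D ≤ a) (hb : D ≤ b) :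
    generatorBound D T a + generatorBound D T b + 2 * T ≤ generatorBound D T (a + b) := by
  have ha1 : 1 ≤ 2 * a / D := (Nat.le_div_iff_mul_le hD).2 (by lia)
  have hb1 : 1 ≤ 2 * b / D := (Nat.le_div_iff_mul_le hD).2 (by lia)
  have hadd := Nat.div_add_div_le_add_div (x := 2 * a) (y := 2 * b) (z := D)
  rw [← mul_add] at hadd
  rw [generatorBound, generatorBound, ← mul_add, ← Nat.mul_succ]
  exact Nat.mul_le_mul_left _ (by lia)

theorem generatorBound_add_le_of_two_mul_le (hD : 0 < D) (ham : 2 * a ≤ m) (hm : D ≤ m) :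
    generatorBound D T a + 2 * T ≤ generatorBound D T m := by
  have hm1 : 1 ≤ m / D := (Nat.one_le_div_iff hD).2 hm
  have ham' : 2 * a / D ≤ m / D := Nat.div_le_div_right ham
  have hadd := Nat.div_add_div_le_add_div (x := m) (y := m) (z := D)
  rw [← two_mul] at hadd
  rw [generatorBound, ← Nat.mul_succ]
  exact Nat.mul_le_mul_left _ (by lia)

end GeneratorBound

section Transitive

open Subgroup MulAction

theorem isMultiplyPretransitive_two_of_orbit_stabilizer {G Ω : Type*} [Group G] [MulAction G Ω]
    [IsPretransitive G Ω] {α x : Ω} (h : ∀ z ≠ α, z ∈ orbit (stabilizer G α) x) :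
    IsMultiplyPretransitive G Ω 2 := by
  refine (SubMulAction.ofStabilizer.isMultiplyPretransitive (a := α)).2 (is_one_pretransitive_iff.2
    ⟨fun u v => ?_⟩)
  obtain ⟨g, hg⟩ := h u u.2
  obtain ⟨k, hk⟩ := h v v.2
  refine ⟨k * g⁻¹, Subtype.ext ?_⟩
  change (k * g⁻¹) • (u : Ω) = v
  rw [← hg, ← hk, mul_smul]
  exact congrArg _ (inv_smul_smul g x)

theorem le_stabilizer_of_ncard_compl_orbit_lt {G Ω : Type*} [Group G] [MulAction G Ω] [Finite Ω]
    {D : ℕ} {A : Subgroup G} {x z : Ω} (hx : (orbit (largePrimeCore D A) x)ᶜ.ncard < D)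
    (hz : z ∉ orbit (largePrimeCore D A) x) : largePrimeCore D A ≤ stabilizer G z := by
  refine (largePrimeCore_le_stabilizer_or_le_ncard_orbit z).resolve_right fun hD => ?_
  have hsub : orbit (largePrimeCore D A) z ⊆ (orbit (largePrimeCore D A) x)ᶜ := fun w hwz hwx =>
    hz (orbit_eq_iff.2 hwx ▸ (orbit_eq_iff.2 hwz).symm ▸ mem_orbit_self z)
  exact (hD.trans (Set.ncard_le_ncard hsub)).not_gt hx

theorem fixedPoints_subset_compl_orbit {G Ω : Type*} [Group G] [MulAction G Ω] {x : Ω}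
    (hx : x ∉ fixedPoints G Ω) : fixedPoints G Ω ⊆ (orbit G x)ᶜ := fun y hy hyx => by
  rw [mem_fixedPoints'.1 hy x (mem_orbit_symm.1 hyx)] at hx
  exact hx hy

theorem FaithfulOnLargePrimes.ofStabilizer {G Ω : Type*} [Group G] [MulAction G Ω] {D : ℕ}
    (hG : FaithfulOnLargePrimes D G Ω) (α : Ω) :
    FaithfulOnLargePrimes D (stabilizer G α) (SubMulAction.ofStabilizer G α) := fun g hg hD => by
  obtain ⟨x, hx⟩ := hG.subgroup _ g hg hD
  have hxα : x ≠ α := by rintro rfl; exact hx g.2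
  exact ⟨⟨x, hxα⟩, fun h => hx (congrArg Subtype.val h)⟩

universe u

variable {G Ω : Type u} [Group G] [Finite G] [MulAction G Ω] [Finite Ω] {D T : ℕ}

theorem IsSmoothlyGenerated.of_largePrimeCore_stabilizer {r : ℕ} {α : Ω}
    (hΩ : Nat.card Ω ≤ D ^ 2)
    (h : IsSmoothlyGenerated D r (largePrimeCore D (stabilizer G α))) :
    IsSmoothlyGenerated D (r + 2) G := by
  refine h.of_subgroup (relIndex_mul_index largePrimeCore_le).symm.dvd
    relIndex_largePrimeCore_mem_smoothNumbers index_ne_zero_of_finite ?_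
  rw [index_stabilizer]
  exact (Set.ncard_le_card _).trans hΩ

/-- If the core of a point stabilizer has no orbit leaving `D` points on either side, it fixes a
second point, and we pass to the cosets of its normalizer. -/
theorem IsSmoothlyGenerated.of_not_isMultiplyPretransitive_two [IsPretransitive G Ω] (hD : 0 < D)
    (hG : FaithfulOnLargePrimes D G Ω) (hΩ : Nat.card Ω ≤ D ^ 2)
    (ih : ∀ j < Nat.card Ω, GeneratedInDegree.{u} D j (generatorBound D T j))
    (h2 : ¬ IsMultiplyPretransitive G Ω 2) :
    IsSmoothlyGenerated D (generatorBound D T (Nat.card Ω) - 2 * T + 2) G := by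
  obtain ⟨α⟩ : Nonempty Ω := by
    by_contra! hempty
    exact h2 ⟨fun x => isEmptyElim (x 0)⟩
  rcases hG.card_mem_smoothNumbers_or_exists_not_le_stabilizer (stabilizer G α) with hA | ⟨x, hx⟩
  · exact (of_largePrimeCore_stabilizer hΩ (of_card_mem_smoothNumbers
      (Nat.mem_smoothNumbers_of_dvd hA (card_dvd_of_le largePrimeCore_le)))).mono (by lia)
  set O := largePrimeCore D (stabilizer G α)
  have hΛ : D ≤ (orbit O x).ncard :=
    (largePrimeCore_le_stabilizer_or_le_ncard_orbit x).resolve_left hx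
  have hsum := Set.ncard_add_ncard_compl (orbit O x)
  by_cases hΛc : D ≤ (orbit O x)ᶜ.ncard
  · have hO := IsSmoothlyGenerated.of_orbit (hG.subgroup O) x (ih _ (by lia)) (ih _ (by lia))
    have hbound := generatorBound_add_add_le (T := T) hD hΛ hΛc
    exact (of_largePrimeCore_stabilizer hΩ hO).mono (by rw [hsum] at hbound; lia)
  · rw [not_le] at hΛc
    obtain ⟨z, hzα, hz⟩ : ∃ z, z ≠ α ∧ z ∉ orbit O x := by
      by_contra! h
      refine h2 (isMultiplyPretransitive_two_of_orbit_stabilizer (α := α) (x := x) fun z hz => ?_)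
      obtain ⟨g, rfl⟩ := h z hz
      exact ⟨⟨g, largePrimeCore_le g.2⟩, rfl⟩
    have hindex := two_mul_index_normalizer_le hzα (le_stabilizer_of_ncard_compl_orbit_lt hΛc hz)
    have hfix : x ∉ fixedPoints O Ω := fun h => hx fun g hg => h ⟨g, hg⟩
    have hfew := (Set.ncard_le_ncard (fixedPoints_subset_compl_orbit hfix)).trans_lt hΛc
    have : (normalizer (O : Set G)).index ≠ 0 := index_ne_zero_of_finite
    exact (ih _ (by lia) G _ (index_eq_card _).symm (hG.quotient_normalizer hfew)).mono
      ((Nat.le_sub_of_add_le (generatorBound_add_le_of_two_mul_le hD hindex (by lia))).trans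
        (Nat.le_add_right _ _))

/-- Each point that is fixed before 2-transitivity fails costs two generators. -/
theorem IsSmoothlyGenerated.of_not_isMultiplyPretransitive (k : ℕ) [IsPretransitive G Ω]
    (hD : 0 < D) (hG : FaithfulOnLargePrimes D G Ω) (hΩ : Nat.card Ω ≤ D ^ 2)
    (ih : ∀ j < Nat.card Ω, GeneratedInDegree.{u} D j (generatorBound D T j))
    (hk : ¬ IsMultiplyPretransitive G Ω (k + 2)) :
    IsSmoothlyGenerated D (generatorBound D T (Nat.card Ω) - 2 * T + 2 * (k + 1)) G := by
  induction k generalizing G Ω with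
  | zero => exact of_not_isMultiplyPretransitive_two hD hG hΩ ih hk
  | succ k ihk =>
    by_cases h2 : IsMultiplyPretransitive G Ω 2
    · obtain ⟨α⟩ : Nonempty Ω := by
        by_contra! hempty
        exact hk ⟨fun x => isEmptyElim (x 0)⟩
      have hcard := SubMulAction.nat_card_ofStabilizer_add_one_eq G α
      rw [SubMulAction.ofStabilizer.isMultiplyPretransitive (a := α)] at h2 hk
      have : IsPretransitive (stabilizer G α) (SubMulAction.ofStabilizer G α) :=
        is_one_pretransitive_iff.1 h2
      have hstab := ihk (hG.ofStabilizer α) (by lia) (fun j hj => ih j (by lia)) hk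
      refine (hstab.of_subgroup (one_mul _).symm.dvd ⟨one_ne_zero, by simp⟩
        index_ne_zero_of_finite (index_stabilizer_of_transitive G α ▸ hΩ)).mono ?_
      have := generatorBound_mono (D := D) (T := T) (Nat.le_of_lt (Nat.lt_of_succ_le hcard.le))
      lia
    · exact (of_not_isMultiplyPretransitive_two hD hG hΩ ih h2).mono (by lia)

end Transitive

section PrimeCycles

open Subgroup MulAction
open scoped Pointwise

variable {G Ω : Type*} [Group G] [MulAction G Ω] {p l : ℕ} {P : Subgroup G} {h : G}

theorem exists_pow_modEq_one_isPGroup_zpowers [Finite G] (hl : l.Prime) (g : G) :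
    ∃ k : ℕ, k ≡ 1 [MOD l] ∧ IsPGroup l (zpowers (g ^ k)) := by
  obtain ⟨e, b, hb, heb⟩ := Nat.exists_eq_pow_mul_and_not_dvd (orderOf_pos g).ne' l hl.ne_one
  obtain ⟨k, hk1, hk0⟩ := Nat.chineseRemainder ((hl.coprime_iff_not_dvd).2 hb) 1 0
  refine ⟨k, hk1, isPGroup_zpowers_of_pow_eq_one (k := e) ?_⟩
  rw [← pow_mul, ← orderOf_dvd_iff_pow_eq_one, heb, mul_comm k]
  exact mul_dvd_mul_left _ (Nat.modEq_zero_iff_dvd.1 hk0)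

theorem mem_fixingSubgroup_orbit_of_smul_eq [Finite Ω] (hp : p.Prime) (hP : IsPGroup p P) {x z : Ω}
    (hcard : (orbit P x).ncard = p) {c : G} (hc : c ∈ P) (hz : z ∈ orbit P x) (hcz : c • z = z) :
    c ∈ fixingSubgroup G (orbit P x) := by
  have hst : c ∈ stabilizer G (orbit P x \ {z}) := by
    rw [mem_stabilizer_iff, Set.smul_set_sdiff, Set.smul_set_singleton, hcz]
    exact congrArg (· \ {z}) (le_stabilizer_orbit P x hc)
  have hfix := le_fixingSubgroup_of_isPGroup hp (hP.to_le (zpowers_le.2 hc)) (Set.toFinite _)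
    (zpowers_le.2 hst)
    (by rw [Set.ncard_sdiff_singleton_of_mem hz, hcard]; exact Nat.pred_lt hp.ne_zero)
    (mem_zpowers c)
  refine (mem_fixingSubgroup_iff G).2 fun w hw => ?_
  rcases eq_or_ne w z with rfl | hwz
  · exact hcz
  · exact (mem_fixingSubgroup_iff G).1 hfix w ⟨hw, hwz⟩

theorem ncard_orbit_eq_of_lt_sq [Finite Ω] (hp : p.Prime) (hP : IsPGroup p P) {x : Ω}
    (hlt : (orbit P x).ncard < p ^ 2) (hmoved : ¬ P ≤ stabilizer G x) :
    (orbit P x).ncard = p := by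
  have : Fact p.Prime := ⟨hp⟩
  have hle := (le_stabilizer_or_le_ncard_orbit hp hP x).resolve_left hmoved
  obtain ⟨n, hn⟩ := hP.card_orbit x
  rw [Nat.card_coe_set_eq] at hn
  rw [hn] at hlt hle
  have hn2 : n < 2 := (Nat.pow_lt_pow_iff_right hp.one_lt).1 hlt
  have hn1 : 1 ≤ n := (Nat.pow_le_pow_iff_right hp.one_lt).1 ((pow_one p).trans_le hle)
  rw [hn, show n = 1 by lia, pow_one]

theorem one_lt_ncard_inter_fixedBy [Finite Ω] (hl : l.Prime) (hlp : l + 2 ≤ p) (hpl : p < 2 * l)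
    {B : Set Ω} (hB : B.ncard = p) (hh : IsPGroup l (zpowers h)) (hst : h ∈ stabilizer G B) :
    1 < (B ∩ fixedBy Ω h).ncard := by
  by_cases hall : B ⊆ fixedBy Ω h
  · rw [Set.inter_eq_left.2 hall]
    lia
  obtain ⟨a, ha, hmoved⟩ := Set.not_subset.1 hall
  have hsub : orbit (zpowers h) a ⊆ B := by
    rintro _ ⟨g, rfl⟩
    exact (mem_stabilizer_set.1 (zpowers_le.2 hst g.2) a).2 ha
  have hcard : (orbit (zpowers h) a).ncard = l :=
    ncard_orbit_eq_of_lt_sq hl hh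
      (by nlinarith [Set.ncard_le_ncard hsub, hl.two_le]) (zpowers_le.not.2 hmoved)
  have hst' : h ∈ stabilizer G (B \ orbit (zpowers h) a) := by
    rw [mem_stabilizer_iff, Set.smul_set_sdiff, hst]
    exact congrArg (B \ ·) (le_stabilizer_orbit (zpowers h) a (mem_zpowers h))
  have hrest : (B \ orbit (zpowers h) a).ncard = p - l := by
    rw [Set.ncard_sdiff hsub, hB, hcard]
  have hfix := le_fixingSubgroup_of_isPGroup hl hh (Set.toFinite _) (zpowers_le.2 hst') (by lia)
    (mem_zpowers h)
  calc 1 < (B \ orbit (zpowers h) a).ncard := by lia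
    _ ≤ (B ∩ fixedBy Ω h).ncard := Set.ncard_le_ncard
      fun w hw => ⟨hw.1, (mem_fixingSubgroup_iff G).1 hfix w hw⟩

theorem mem_fixingSubgroup_orbit_of_mem_normalizer [Finite Ω] (hp : p.Prime) (hl : l.Prime)
    (hlp : l + 2 ≤ p) (hpl : p < 2 * l) (hP : IsPGroup p P) {x : Ω}
    (hcard : (orbit P x).ncard = p) (hh : IsPGroup l (zpowers h)) (hnorm : h ∈ normalizer P)
    (hst : h ∈ stabilizer G (orbit P x)) : h ∈ fixingSubgroup G (orbit P x) := by
  set F := orbit P x ∩ fixedBy Ω h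
  obtain ⟨y, hy, z, hz, hyz⟩ := (Set.one_lt_ncard (Set.toFinite F)).1
    (one_lt_ncard_inter_fixedBy hl hlp hpl hcard hh hst)
  obtain ⟨⟨u, hu⟩, huy : u • y = z⟩ : z ∈ orbit P y := by
    rw [orbit_eq_iff.2 hy.1]; exact hz.1
  -- `[h, u]` lies in `P` and fixes `z`, hence fixes the orbit: `h` and `u` commute on it.
  have hcomm : ∀ w ∈ orbit P x, h • u • w = u • h • w := by
    have hcP : h * u * h⁻¹ * u⁻¹ ∈ P :=
      P.mul_mem ((mem_normalizer_iff.1 hnorm u).1 hu) (P.inv_mem hu)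
    have hcz : (h * u * h⁻¹ * u⁻¹) • z = z := by
      rw [mul_smul, ← huy, inv_smul_smul, mul_smul, mul_smul, inv_smul_eq_iff.2 hy.2.symm, huy]
      exact hz.2
    intro w hw
    have huhw : u • h • w ∈ orbit P x :=
      mem_orbit_of_mem_orbit (⟨u, hu⟩ : P) ((mem_stabilizer_set.1 hst w).2 hw)
    have hfix := (mem_fixingSubgroup_iff G).1
      (mem_fixingSubgroup_orbit_of_smul_eq hp hP hcard hcP hz.1 hcz) _ huhw
    rwa [mul_smul, inv_smul_smul, mul_smul, mul_smul, inv_smul_smul] at hfix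
  have huF : u ∈ stabilizer G F := by
    refine (mem_stabilizer_set_iff_smul_set_subset (Set.toFinite _)).2 ?_
    rintro _ ⟨w, hw, rfl⟩
    exact ⟨mem_orbit_of_mem_orbit (⟨u, hu⟩ : P) hw.1,
      (hcomm w hw.1).trans (congrArg (u • ·) hw.2)⟩
  have hple : p ≤ F.ncard := by
    by_contra! hlt
    have hufix := le_fixingSubgroup_of_isPGroup hp (hP.to_le (zpowers_le.2 hu)) (Set.toFinite F)
      (zpowers_le.2 huF) hlt (mem_zpowers u)
    exact hyz (((mem_fixingSubgroup_iff G).1 hufix y hy).symm.trans huy)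
  have hFeq : F = orbit P x :=
    Set.eq_of_subset_of_ncard_le Set.inter_subset_left (hcard ▸ hple)
  exact (mem_fixingSubgroup_iff G).2 fun w hw => (hFeq ▸ hw : w ∈ F).2

theorem ncard_image_orbit_mul_le [Finite Ω] {B : Set Ω} (hB : P ≤ stabilizer G B)
    (hcard : ∀ x ∈ B, p ≤ (orbit P x).ncard) :
    p * ((fun x => orbit P x) '' B).ncard ≤ B.ncard := by
  classical
  lift B to Finset Ω using Set.toFinite B
  rw [← Finset.coe_image, Set.ncard_coe_finset, Set.ncard_coe_finset]
  refine Finset.mul_card_image_le_card B p fun O hO => ?_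
  obtain ⟨x, hx, rfl⟩ := Finset.mem_image.1 hO
  refine (hcard x hx).trans (((Set.ncard_le_ncard fun y hy => ?_).trans_eq
    (Set.ncard_coe_finset _)))
  rw [Finset.mem_coe, Finset.mem_filter]
  obtain ⟨u, rfl⟩ := hy
  exact ⟨(mem_stabilizer_set.1 (hB u.2) x).2 hx, orbit_smul u x⟩

theorem smul_orbit_of_mem_normalizer (hnorm : h ∈ normalizer P) (x : Ω) :
    h • orbit P x = orbit P (h • x) := by
  ext y
  rw [Set.mem_smul_set_iff_inv_smul_mem]
  constructor
  · rintro ⟨⟨u, hu⟩, hux : u • x = h⁻¹ • y⟩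
    refine ⟨⟨h * u * h⁻¹, (mem_normalizer_iff.1 hnorm u).1 hu⟩, ?_⟩
    change (h * u * h⁻¹) • h • x = y
    rw [mul_smul, mul_smul, inv_smul_smul, hux, smul_inv_smul]
  · rintro ⟨⟨u, hu⟩, rfl⟩
    refine ⟨⟨h⁻¹ * u * h, (mem_normalizer_iff''.1 hnorm u).1 hu⟩, ?_⟩
    change (h⁻¹ * u * h) • x = h⁻¹ • u • h • x
    rw [mul_smul, mul_smul]

theorem mem_fixingSubgroup_of_mem_normalizer [Finite Ω] (hp : p.Prime) (hl : l.Prime)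
    (hlp : l + 2 ≤ p) (hpl : p < 2 * l) (hP : IsPGroup p P) {B : Set Ω}
    (hPB : P ≤ stabilizer G B) (horbit : ∀ x ∈ B, (orbit P x).ncard = p)
    (hcard : B.ncard < p * l) (hh : IsPGroup l (zpowers h)) (hnorm : h ∈ normalizer P)
    (hst : h ∈ stabilizer G B) : h ∈ fixingSubgroup G B := by
  set O := (fun x => orbit P x) '' B
  have hOcard : O.ncard < l := Nat.lt_of_mul_lt_mul_left
    ((ncard_image_orbit_mul_le hPB fun x hx => (horbit x hx).ge).trans_lt hcard)
  have hOst : h ∈ stabilizer G O := by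
    refine (mem_stabilizer_set_iff_smul_set_subset (Set.toFinite _)).2 ?_
    rintro _ ⟨_, ⟨x, hx, rfl⟩, rfl⟩
    exact ⟨h • x, (mem_stabilizer_set.1 hst x).2 hx, (smul_orbit_of_mem_normalizer hnorm x).symm⟩
  have hOfix := (mem_fixingSubgroup_iff G).1 (le_fixingSubgroup_of_isPGroup hl hh
    (Set.toFinite _) (zpowers_le.2 hOst) hOcard (mem_zpowers h))
  exact (mem_fixingSubgroup_iff G).2 fun x hx => (mem_fixingSubgroup_iff G).1
    (mem_fixingSubgroup_orbit_of_mem_normalizer hp hl hlp hpl hP (horbit x hx) hh hnorm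
      (hOfix _ ⟨x, hx, rfl⟩)) x (mem_orbit_self x)

theorem ncard_orbit_sylow_eq [Finite G] [Finite Ω] (hp : p.Prime) {q : ℕ} (hq : q < p) {x : Ω}
    (hx : (orbit G x).ncard = p * q) (Q : Sylow p G) : (orbit Q x).ncard = p := by
  have : Fact p.Prime := ⟨hp⟩
  refine ncard_orbit_eq_of_lt_sq hp Q.2 ?_ fun hQ => ?_
  · calc (orbit Q x).ncard ≤ p * q := (Set.ncard_le_ncard (orbit_subgroup_subset _ x)).trans_eq hx
      _ < p ^ 2 := by rw [sq]; exact Nat.mul_lt_mul_of_pos_left hq hp.pos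
  · refine Q.not_dvd_index ((Dvd.intro q ?_).trans (index_dvd_of_le hQ))
    rw [index_stabilizer, hx]

theorem fixingSubgroup_normal_of_forall_mem_stabilizer {S : Set Ω}
    (hS : ∀ g : G, g ∈ stabilizer G S) : (fixingSubgroup G S).Normal where
  conj_mem n hn g := (mem_fixingSubgroup_iff G).2 fun x hx => by
    have hx' : g⁻¹ • x ∈ S := (mem_stabilizer_set.1 (hS g⁻¹) x).2 hx
    rw [mul_smul, mul_smul, (mem_fixingSubgroup_iff G).1 hn _ hx', smul_inv_smul]

/- Frattini's argument lets one take `h` in the normalizer of a Sylow `p`-subgroup of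
`fixingSubgroup G S`, all of whose orbits on `Sᶜ` have size `p`. -/
theorem exists_mem_fixingSubgroup_compl_of_pow_mem [Finite G] [Finite Ω] (hp : p.Prime)
    (hl : l.Prime) (hlp : l + 2 ≤ p) (hpl : p < 2 * l) {q : ℕ} (hq : q < l) {S : Set Ω}
    (hS : ∀ g : G, g ∈ stabilizer G S) (hcompl : Sᶜ.ncard = p * q)
    (htrans : ∀ x ∈ Sᶜ, orbit (fixingSubgroup G S) x = Sᶜ) {g : G}
    (hg : g ^ l ∈ fixingSubgroup G S) :
    ∃ h ∈ fixingSubgroup G Sᶜ, g⁻¹ * h ∈ fixingSubgroup G S := by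
  have : Fact p.Prime := ⟨hp⟩
  set N := fixingSubgroup G S
  have hN : N.Normal := fixingSubgroup_normal_of_forall_mem_stabilizer hS
  have hScompl : ∀ g : G, g ∈ stabilizer G Sᶜ := fun g => by
    rw [stabilizer_compl]; exact hS g
  obtain ⟨Q⟩ : Nonempty (Sylow p N) := inferInstance
  set P : Subgroup G := (Q : Subgroup N).map N.subtype
  obtain ⟨h, hnorm, n, hn, hgn⟩ : ∃ h ∈ normalizer P, ∃ n ∈ N, h * n = g :=
    mem_sup_of_normal_right.1 (Sylow.normalizer_sup_eq_top Q ▸ mem_top g)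
  obtain ⟨k, hk, hhk⟩ := exists_pow_modEq_one_isPGroup_zpowers hl h
  have horbit : ∀ x ∈ Sᶜ, (orbit P x).ncard = p := fun x hx => by
    rw [← ncard_orbit_sylow_eq hp (q := q) (by lia) (by rw [htrans x hx, hcompl]) Q]
    congr 1
    ext y
    constructor
    · rintro ⟨⟨_, u, hu, rfl⟩, rfl⟩
      exact ⟨⟨u, hu⟩, rfl⟩
    · rintro ⟨⟨u, hu⟩, rfl⟩
      exact ⟨⟨u, u, hu, rfl⟩, rfl⟩
  refine ⟨h ^ k, mem_fixingSubgroup_of_mem_normalizer hp hl hlp hpl (Q.2.map _)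
    (fun u _ => hScompl u) horbit ?_ hhk (pow_mem hnorm k) (hScompl _), ?_⟩
  · rw [hcompl]
    exact Nat.mul_lt_mul_of_pos_left hq hp.pos
  · have hhg : (g : G ⧸ N) = h := by
      rw [← hgn, QuotientGroup.mk_mul, (QuotientGroup.eq_one_iff n).2 hn, mul_one]
    have hgl : (g : G ⧸ N) ^ l = 1 := (QuotientGroup.eq_one_iff _).2 hg
    rw [← QuotientGroup.eq, QuotientGroup.mk_pow, ← hhg, ← pow_one (g : G ⧸ N), ← pow_mul, one_mul]
    exact pow_eq_pow_iff_modEq.2 (hk.symm.of_dvd (orderOf_dvd_of_pow_eq_one hgl))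

end PrimeCycles

section Alternating

open Subgroup MulAction Equiv
open scoped Pointwise

variable {Ω : Type*}

theorem exists_forall_smul_eq_apply {G : Type*} [Group G] [MulAction G Ω] (S : Finset Ω)
    [IsMultiplyPretransitive G Ω S.card] (σ : Perm Ω) : ∃ g : G, ∀ x ∈ S, g • x = σ x := by
  let i : Fin S.card ↪ Ω := S.equivFin.symm.toEmbedding.trans (Function.Embedding.subtype _)
  obtain ⟨g, hg⟩ := exists_smul_eq G i (i.trans σ.toEmbedding)
  refine ⟨g, fun x hx => ?_⟩
  have hx' := DFunLike.congr_fun hg (S.equivFin ⟨x, hx⟩)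
  simpa only [i, Function.Embedding.smul_apply, Function.Embedding.trans_apply,
    Equiv.coe_toEmbedding, Equiv.symm_apply_apply, Function.Embedding.subtype_apply] using hx'

theorem isMultiplyPretransitive_card_of_succ [Finite Ω] {G : Type*} [Group G] [MulAction G Ω]
    {S : Finset Ω} (hS : (S : Set Ω)ᶜ.Nonempty) [hG : IsMultiplyPretransitive G Ω (S.card + 1)] :
    IsMultiplyPretransitive G Ω S.card := by
  refine isMultiplyPretransitive_of_le (n := S.card + 1) (Nat.le_succ _) ?_
  have hcard := Set.ncard_add_ncard_compl (S : Set Ω)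
  rw [Set.ncard_coe_finset] at hcard
  rw [← hcard]
  exact Nat.add_le_add_left (Set.ncard_pos (Set.toFinite _) |>.2 hS) _

theorem orbit_fixingSubgroup_stabilizer_eq_compl {G : Type*} [Group G] [MulAction G Ω]
    {S : Finset Ω} (hG : IsMultiplyPretransitive G Ω (S.card + 1)) {x : Ω} (hx : x ∉ S) :
    orbit (fixingSubgroup (stabilizer G (S : Set Ω)) (S : Set Ω)) x = (S : Set Ω)ᶜ := by
  classical
  refine Set.Subset.antisymm ?_ fun y hy => ?_
  · rintro _ ⟨g, rfl⟩
    exact (mem_stabilizer_set.1 g.1.2 x).not.2 hx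
  · rw [← Finset.card_insert_of_notMem hx] at hG
    obtain ⟨g, hg⟩ := exists_forall_smul_eq_apply (G := G) (insert x S) (swap x y)
    have hgS : ∀ z ∈ S, g • z = z := fun z hz => by
      rw [hg z (Finset.mem_insert_of_mem hz)]
      exact swap_apply_of_ne_of_ne (fun h => hx (h ▸ hz)) (fun h => hy (h ▸ hz))
    have hgst : g ∈ stabilizer G (S : Set Ω) :=
      (mem_stabilizer_set_iff_smul_set_subset S.finite_toSet).2 <| by
        rintro _ ⟨z, hz, rfl⟩
        exact Set.mem_of_eq_of_mem (hgS z hz) hz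
    refine ⟨⟨⟨g, hgst⟩, (mem_fixingSubgroup_iff _).2 hgS⟩, ?_⟩
    exact (hg x (Finset.mem_insert_self x S)).trans (swap_apply_left x y)

theorem mem_of_isMultiplyPretransitive_of_pow_eq_one [Finite Ω] {p l q : ℕ} (hp : p.Prime)
    (hl : l.Prime) (hlp : l + 2 ≤ p) (hpl : p < 2 * l) (hq0 : q ≠ 0) (hq : q < l)
    {G : Subgroup (Perm Ω)} {S : Finset Ω} (hcompl : (S : Set Ω)ᶜ.ncard = p * q)
    (hG : IsMultiplyPretransitive G Ω (S.card + 1)) {σ : Perm Ω} (hσS : ∀ x ∉ S, σ x = x)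
    (hσ : σ ^ l = 1) : σ ∈ G := by
  have hne : (S : Set Ω)ᶜ.Nonempty :=
    Set.nonempty_of_ncard_ne_zero (hcompl ▸ mul_ne_zero hp.ne_zero hq0)
  have := isMultiplyPretransitive_card_of_succ (G := G) hne
  obtain ⟨g, hg⟩ := exists_forall_smul_eq_apply (G := G) S σ
  have hσmem : ∀ x ∈ S, σ x ∈ S := fun x hx => by
    by_contra hcon
    exact hcon ((σ.injective (hσS _ hcon)).symm ▸ hx)
  have hgst : g ∈ stabilizer G (S : Set Ω) :=
    (mem_stabilizer_set_iff_smul_set_subset S.finite_toSet).2 <| by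
      rintro _ ⟨x, hx, rfl⟩
      exact Set.mem_of_eq_of_mem (hg x hx) (hσmem x hx)
  have hpow : ∀ n : ℕ, ∀ x ∈ S, g ^ n • x = (σ ^ n) x := by
    intro n
    induction n with
    | zero => simp
    | succ n ih =>
      intro x hx
      rw [pow_succ, pow_succ, mul_smul, Perm.mul_apply, hg x hx, ih _ (hσmem x hx)]
  obtain ⟨h, hfix, hgh⟩ := exists_mem_fixingSubgroup_compl_of_pow_mem hp hl hlp hpl hq
    (fun γ : stabilizer G (S : Set Ω) => γ.2) hcompl
    (fun x hx => orbit_fixingSubgroup_stabilizer_eq_compl hG hx) (g := ⟨g, hgst⟩)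
    ((mem_fixingSubgroup_iff _).2 fun x hx => by
      change g ^ l • x = x
      rw [hpow l x hx, hσ, Perm.one_apply])
  have hhσ : (h : Perm Ω) = σ := by
    ext x
    by_cases hx : x ∈ S
    · have hx' : g⁻¹ • h • x = x := (mem_fixingSubgroup_iff _).1 hgh x hx
      exact (inv_smul_eq_iff.1 hx').trans (hg x hx)
    · exact ((mem_fixingSubgroup_iff _).1 hfix x hx).trans (hσS x hx).symm
  exact hhσ ▸ h.1.2

theorem exists_isThreeCycle_mem [Fintype Ω] [DecidableEq Ω] {G : Subgroup (Perm Ω)} {l : ℕ}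
    (hl : 3 ≤ l) {S : Finset Ω} (hlS : l ≤ S.card)
    (hG : ∀ σ : Perm Ω, (∀ x ∉ S, σ x = x) → σ ^ l = 1 → σ ∈ G) :
    ∃ τ ∈ G, τ.IsThreeCycle := by
  obtain ⟨T, hTS, hT⟩ := Finset.exists_subset_card_eq hlS
  set xs := T.toList
  have hlen : xs.length = l := by rw [Finset.length_toList, hT]
  have hnodup : xs.Nodup := T.nodup_toList
  have hmem : ∀ {i : ℕ} (hi : i < xs.length), xs[i] ∈ S := fun _ =>
    hTS (Finset.mem_toList.1 (List.getElem_mem _))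
  set σ := xs.formPerm
  have hσS : ∀ x ∉ S, σ x = x := fun x hx =>
    List.formPerm_apply_of_notMem fun h => hx (hTS (Finset.mem_toList.1 h))
  have hσl : σ ^ l = 1 := hlen ▸ List.formPerm_pow_length_eq_one_of_nodup _ hnodup
  set a := xs[0]
  set b := xs[1]
  set c := xs[2]
  have hσa : σ a = b := List.formPerm_apply_lt_getElem xs hnodup 0 (by lia)
  have hσb : σ b = c := List.formPerm_apply_lt_getElem xs hnodup 1 (by lia)
  have hconj : swap a b * σ * (swap a b)⁻¹ ∈ G := by
    refine hG _ (fun x hx => ?_) (by rw [conj_pow, hσl, mul_one, mul_inv_cancel])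
    have hfix : swap a b x = x :=
      swap_apply_of_ne_of_ne (fun h => hx (h ▸ hmem _)) (fun h => hx (h ▸ hmem _))
    rw [swap_inv, Perm.mul_apply, Perm.mul_apply, hfix, hσS x hx, hfix]
  have hcomm : swap a b * σ * (swap a b)⁻¹ * σ⁻¹ = swap b a * swap b c := by
    rw [swap_comm b a, ← hσa, ← hσb, ← hσa, swap_inv, mul_assoc, mul_assoc,
      swap_apply_apply, mul_assoc]
  refine ⟨_, G.mul_mem hconj (G.inv_mem (hG σ hσS hσl)), ?_⟩
  rw [hcomm]
  refine Perm.isThreeCycle_swap_mul_swap_same ?_ ?_ ?_ <;>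
    exact fun h => absurd ((hnodup.getElem_inj_iff).1 h) (by decide)

theorem alternatingGroup_le_of_isMultiplyPretransitive [Fintype Ω] [DecidableEq Ω] {p : ℕ}
    (hp : p.Prime) (hp7 : 7 ≤ p) (hle : 2 * p ≤ Nat.card Ω) (hcard : 2 * Nat.card Ω ≤ p * (p - 1))
    {G : Subgroup (Perm Ω)} (hG : IsMultiplyPretransitive G Ω (2 * p)) :
    alternatingGroup Ω ≤ G := by
  have hG' : ∀ {k : ℕ}, k ≤ 2 * p → IsMultiplyPretransitive G Ω k := fun hk =>
    isMultiplyPretransitive_of_le hk hle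
  obtain ⟨l, hl, hpl, hlp⟩ := Nat.exists_prime_lt_and_le_two_mul ((p - 1) / 2) (by lia)
  have hp_odd := hp.eq_two_or_odd
  have hl_odd := hl.eq_two_or_odd
  set q := Nat.card Ω / p - 1
  have hq2 : 2 ≤ Nat.card Ω / p := (Nat.le_div_iff_mul_le hp.pos).2 hle
  have hqp : 2 * (Nat.card Ω / p) ≤ p - 1 := by
    refine Nat.le_of_mul_le_mul_left (le_trans ?_ hcard) hp.pos
    rw [mul_left_comm]
    exact Nat.mul_le_mul_left 2 (Nat.mul_div_le _ p)
  have hmod := Nat.mod_lt (Nat.card Ω) hp.pos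
  have hsum : p + Nat.card Ω % p + p * q = Nat.card Ω := by
    rw [Nat.mul_sub, mul_one]
    have := Nat.div_add_mod (Nat.card Ω) p
    have := Nat.mul_le_mul_left p hq2
    lia
  obtain ⟨S, -, hS⟩ := Finset.exists_subset_card_eq (s := (Finset.univ : Finset Ω))
    (n := p + Nat.card Ω % p) (by rw [Finset.card_univ, ← Nat.card_eq_fintype_card]; lia)
  have hcompl : (S : Set Ω)ᶜ.ncard = p * q := by
    rw [Set.ncard_compl, Set.ncard_coe_finset, hS]; lia
  obtain ⟨τ, hτG, hτ⟩ := exists_isThreeCycle_mem (by lia) (by lia : l ≤ S.card) fun σ hσS hσ =>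
    mem_of_isMultiplyPretransitive_of_pow_eq_one hp hl (by lia) (by lia) (by lia) (by lia)
      hcompl (hG' (by lia)) hσS hσ
  have := hG' (k := 2) (by lia)
  exact Perm.alternatingGroup_le_of_isPreprimitive_of_isThreeCycle_mem
    (isPreprimitive_of_is_two_pretransitive this) hτ hτG

theorem exists_closure_pair_eq_top_perm [Finite Ω] [Nontrivial Ω] :
    ∃ σ τ : Perm Ω, closure {σ, τ} = ⊤ := by
  classical
  have := Fintype.ofFinite Ω
  set xs := (Finset.univ : Finset Ω).toList
  have hlen : 1 < xs.length := by
    rw [Finset.length_toList]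
    exact Fintype.one_lt_card
  have hsupport : xs.formPerm.support = Finset.univ := by
    rw [List.support_formPerm_of_nodup _ (Finset.nodup_toList _), Finset.toList_toFinset]
    exact fun x hx => hlen.ne' (congrArg List.length hx)
  obtain ⟨x⟩ : Nonempty Ω := inferInstance
  exact ⟨_, _, Perm.closure_cycle_adjacent_swap
    (List.isCycle_formPerm (Finset.nodup_toList _) hlen) hsupport x⟩

theorem IsSmoothlyGenerated.of_alternatingGroup_le [Fintype Ω] [DecidableEq Ω] [Nontrivial Ω]
    {G : Subgroup (Perm Ω)} (D : ℕ) (h : alternatingGroup Ω ≤ G) : IsSmoothlyGenerated D 4 G := by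
  classical
  have hindex : G.index ≤ 2 :=
    Nat.le_of_dvd two_pos (alternatingGroup.index_eq_two (α := Ω) ▸ index_dvd_of_le h)
  obtain ⟨σ, τ, hστ⟩ := exists_closure_pair_eq_top_perm (Ω := Ω)
  obtain ⟨T, hT, hTtop⟩ := exists_finset_card_le_mul G (S := {σ, τ})
    (by rwa [Finset.coe_insert, Finset.coe_singleton])
  refine ⟨T, hT.trans (Nat.mul_le_mul hindex Finset.card_le_two), ?_⟩
  rw [hTtop, index_top]
  exact ⟨one_ne_zero, by simp⟩

end Alternating

section Generation

open Subgroup MulAction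

universe u

variable {G Ω : Type u} [Group G] [Finite G] [MulAction G Ω] [Finite Ω] {D p : ℕ}

theorem IsSmoothlyGenerated.of_isMultiplyPretransitive (hp : p.Prime) (hp7 : 7 ≤ p)
    (hG : FaithfulOnLargePrimes D G Ω) (hle : 2 * p ≤ Nat.card Ω)
    (hcard : 2 * Nat.card Ω ≤ p * (p - 1)) (hmulti : IsMultiplyPretransitive G Ω (2 * p)) :
    IsSmoothlyGenerated D 4 G := by
  classical
  have := Fintype.ofFinite Ω
  have : Nontrivial Ω := Finite.one_lt_card_iff_nontrivial.1 (by lia)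
  have hrange : IsMultiplyPretransitive (toPermHom G Ω).range Ω (2 * p) :=
    isMultiplyPretransitive_iff.2 fun x y => by
      obtain ⟨g, hg⟩ := exists_smul_eq G x y
      exact ⟨⟨_, g, rfl⟩, hg⟩
  exact .of_range_of_ker (toPermHom G Ω)
    (.of_alternatingGroup_le D (alternatingGroup_le_of_isMultiplyPretransitive hp hp7 hle hcard
      hrange))
    (.of_card_mem_smoothNumbers hG.card_ker_mem_smoothNumbers)

theorem IsSmoothlyGenerated.of_isPretransitive [IsPretransitive G Ω] (hp : p.Prime) (hp7 : 7 ≤ p)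
    (hpD : 2 * p ≤ D) (hG : FaithfulOnLargePrimes D G Ω) (hD : D ≤ Nat.card Ω)
    (hcard : 2 * Nat.card Ω ≤ p * (p - 1))
    (ih : ∀ j < Nat.card Ω, GeneratedInDegree.{u} D j (generatorBound D (2 * p) j)) :
    IsSmoothlyGenerated D (generatorBound D (2 * p) (Nat.card Ω)) G := by
  have hbound := two_mul_le_generatorBound (D := D) (T := 2 * p) (by lia) hD
  by_cases hmulti : IsMultiplyPretransitive G Ω (2 * p)
  · exact (of_isMultiplyPretransitive hp hp7 hG (hpD.trans hD) hcard hmulti).mono (by lia)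
  · have hsq : Nat.card Ω ≤ D ^ 2 := by
      have := Nat.mul_le_mul (show p ≤ D by lia) (show p - 1 ≤ D by lia)
      lia
    refine (of_not_isMultiplyPretransitive (2 * p - 2) (by lia) hG hsq ih ?_).mono (by lia)
    rwa [Nat.sub_add_cancel (by lia)]

theorem generatedInDegree_generatorBound (hp : p.Prime) (hp7 : 7 ≤ p) (hpD : 2 * p ≤ D) {m : ℕ}
    (hm : 2 * m ≤ p * (p - 1)) : GeneratedInDegree.{u} D m (generatorBound D (2 * p) m) := by
  induction m using Nat.strong_induction_on with
  | _ m ih =>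
  intro G Ω _ _ _ _ hΩ hG
  subst hΩ
  have ih' : ∀ j < Nat.card Ω, GeneratedInDegree.{u} D j (generatorBound D (2 * p) j) :=
    fun j hj => ih j hj (by lia)
  rcases hG.card_mem_smoothNumbers_or_exists_not_le_stabilizer ⊤ with hsmooth | ⟨x, hx⟩
  · rw [card_top] at hsmooth
    exact (IsSmoothlyGenerated.of_card_mem_smoothNumbers hsmooth).mono (Nat.zero_le _)
  set K := largePrimeCore D (⊤ : Subgroup G)
  have hD : D ≤ (orbit K x).ncard :=
    (largePrimeCore_le_stabilizer_or_le_ncard_orbit x).resolve_left hx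
  by_cases huniv : orbit K x = Set.univ
  · have : IsPretransitive G Ω :=
      (isPretransitive_iff_orbit_eq_univ x).2
        (Set.eq_univ_of_univ_subset (huniv ▸ orbit_subgroup_subset K x))
    refine .of_isPretransitive hp hp7 hpD hG (hD.trans (Set.ncard_le_card _)) hm ih'
  · have hsum := Set.ncard_add_ncard_compl (orbit K x)
    have hK : IsSmoothlyGenerated D _ K := .of_orbit (hG.subgroup K) x
      (ih' _ (Set.ncard_lt_card huniv)) (ih' _ (by lia))
    have hindex : K.index ∈ D.smoothNumbers := by
      rw [← relIndex_top_right]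
      exact relIndex_largePrimeCore_mem_smoothNumbers
    refine (hK.of_subgroup (v := 1) (k := 0) (by rw [mul_one]) hindex one_ne_zero (by simp)).mono ?_
    rw [← hsum]
    exact generatorBound_add_le (by lia) hD

end Generation

section PGroupCount

open Subgroup

variable {G : Type*} [Group G] {p : ℕ} {H K M Q : Subgroup G}

theorem card_mul_relIndex (h : H ≤ K) : Nat.card H * H.relIndex K = Nat.card K := by
  rw [← relIndex_bot_left, ← relIndex_bot_left, relIndex_mul_relIndex _ _ _ bot_le h]

theorem relIndex_eq_of_card_eq_pow (hp : p.Prime) (hMQ : M ≤ Q) {a : ℕ}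
    (hM : Nat.card M = p ^ a) (hQ : Nat.card Q = p ^ (a + 1)) : M.relIndex Q = p := by
  have hmul := card_mul_relIndex hMQ
  rw [hM, hQ, pow_succ] at hmul
  exact Nat.eq_of_mul_eq_mul_left (pow_pos hp.pos a) hmul

theorem relIndex_eq_of_relIndex_eq_prime (hp : p.Prime) (hM : M.relIndex Q = p) (hHQ : H ≤ Q)
    {k : ℕ} (hH : Nat.card H = p ^ k) (hHM : ¬ H ≤ M) : M.relIndex H = p := by
  obtain ⟨i, -, hi⟩ := (Nat.dvd_prime_pow hp).1 (hH ▸ relIndex_dvd_card M H)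
  have hi0 : i ≠ 0 := by
    rintro rfl
    exact hHM (relIndex_eq_one.1 (hi.trans (pow_zero p)))
  refine le_antisymm ?_ (hi ▸ Nat.le_self_pow hi0 p)
  exact hM ▸ relIndex_le_of_le_right hHQ (hM ▸ hp.ne_zero)

theorem inf_sup_zpowers_eq_of_prime_relIndex (h : (M.relIndex H).Prime) {x : G} (hx : x ∈ H)
    (hxM : x ∉ M) : H ⊓ M ⊔ zpowers x = H := by
  have hle : H ⊓ M ⊔ zpowers x ≤ H := sup_le inf_le_left (zpowers_le.2 hx)
  have hmul := relIndex_mul_relIndex (H ⊓ M) _ H le_sup_left hle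
  rw [inf_relIndex_left] at hmul
  rcases (Nat.dvd_prime h).1 (Dvd.intro_left _ hmul) with h1 | h1
  · exact le_antisymm hle (relIndex_eq_one.1 h1)
  · rw [h1, mul_eq_right₀ h.ne_zero, relIndex_eq_one] at hmul
    exact absurd (hmul (mem_sup_right (mem_zpowers x))).2 hxM

variable [Finite G]

theorem ncard_coe_sdiff_coe (H M : Subgroup G) :
    ((H : Set G) \ M).ncard = Nat.card H - Nat.card (H ⊓ M : Subgroup G) := by
  rw [← Set.sdiff_inter_self_eq_sdiff, Set.inter_comm, ← coe_inf,
    Set.ncard_sdiff (SetLike.coe_subset_coe.2 inf_le_left), ← Nat.card_coe_set_eq,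
    ← Nat.card_coe_set_eq]
  rfl

/-- An element of `Q \ M` lies in at most one of the subgroups counted. -/
theorem ncard_setOf_inf_eq_le (hp : p.Prime) {j d : ℕ} (hMQ : M ≤ Q)
    (hQ : Nat.card Q = p ^ (j + 1 + d)) (hM : Nat.card M = p ^ (j + d)) (hK : Nat.card K = p ^ j) :
    {H : Subgroup G | H ≤ Q ∧ Nat.card H = p ^ (j + 1) ∧ H ⊓ M = K}.ncard ≤ p ^ d := by
  classical
  have hindex : M.relIndex Q = p :=
    relIndex_eq_of_card_eq_pow hp hMQ hM (by rw [hQ, add_right_comm])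
  have hlt : p ^ j < p ^ (j + 1) := Nat.pow_lt_pow_right hp.one_lt j.lt_succ_self
  set F := {H : Subgroup G | H ≤ Q ∧ Nat.card H = p ^ (j + 1) ∧ H ⊓ M = K}
  have hprime : ∀ H ∈ F, (M.relIndex H).Prime := by
    rintro H ⟨hHQ, hH, hinf⟩
    rw [relIndex_eq_of_relIndex_eq_prime hp hindex hHQ hH]
    · exact hp
    · intro hHM
      rw [← hH, ← hK, ← hinf, inf_eq_left.2 hHM] at hlt
      exact lt_irrefl _ hlt
  have hcount : F.ncard * (p ^ (j + 1) - p ^ j) ≤ ((Q : Set G) \ M).ncard * 1 := by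
    rw [Set.ncard_eq_toFinset_card F, Set.ncard_eq_toFinset_card ((Q : Set G) \ M)]
    refine Finset.card_mul_le_card_mul (fun H x => x ∈ H) (fun H hH => ?_) (fun x hx => ?_)
    · obtain ⟨hHQ, hH, hinf⟩ := (Set.Finite.mem_toFinset _).1 hH
      rw [← hH, ← hK, ← hinf, ← ncard_coe_sdiff_coe, Set.ncard_eq_toFinset_card]
      refine Finset.card_le_card fun x hx => ?_
      simp only [Set.Finite.mem_toFinset, Set.mem_sdiff, SetLike.mem_coe] at hx
      simpa [Finset.bipartiteAbove] using ⟨⟨hHQ hx.1, hx.2⟩, hx.1⟩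
    · have hxM : x ∉ M := ((Set.Finite.mem_toFinset _).1 hx).2
      refine Finset.card_le_one.2 fun H hH H' hH' => ?_
      simp only [Finset.bipartiteBelow, Finset.mem_filter, Set.Finite.mem_toFinset] at hH hH'
      rw [← inf_sup_zpowers_eq_of_prime_relIndex (hprime H hH.1) hH.2 hxM,
        ← inf_sup_zpowers_eq_of_prime_relIndex (hprime H' hH'.1) hH'.2 hxM, hH.1.2.2, hH'.1.2.2]
  rw [ncard_coe_sdiff_coe, inf_eq_right.2 hMQ, hQ, hM, mul_one, pow_add p (j + 1) d,
    pow_add p j d,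
    ← Nat.sub_mul, mul_comm] at hcount
  exact Nat.le_of_mul_le_mul_left hcount (Nat.sub_pos_of_lt hlt)

theorem ncard_setOf_not_le_le (hp : p.Prime) {j d : ℕ} (hMQ : M ≤ Q)
    (hQ : Nat.card Q = p ^ (j + 1 + d)) (hM : Nat.card M = p ^ (j + d)) :
    {H : Subgroup G | H ≤ Q ∧ Nat.card H = p ^ (j + 1) ∧ ¬ H ≤ M}.ncard ≤
      p ^ d * {H : Subgroup G | H ≤ M ∧ Nat.card H = p ^ j}.ncard := by
  classical
  have hindex : M.relIndex Q = p :=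
    relIndex_eq_of_card_eq_pow hp hMQ hM (by rw [hQ, add_right_comm])
  have hinf : ∀ H : Subgroup G, H ≤ Q → Nat.card H = p ^ (j + 1) → ¬ H ≤ M →
      Nat.card (H ⊓ M : Subgroup G) = p ^ j := by
    intro H hHQ hH hHM
    have hmul := card_mul_relIndex (inf_le_left : H ⊓ M ≤ H)
    rw [inf_relIndex_left, relIndex_eq_of_relIndex_eq_prime hp hindex hHQ hH hHM, hH,
      pow_succ] at hmul
    exact Nat.eq_of_mul_eq_mul_right hp.pos hmul
  rw [Set.ncard_eq_toFinset_card, Set.ncard_eq_toFinset_card]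
  refine Finset.card_le_mul_card_image_of_maps_to (f := fun H => H ⊓ M) (fun H hH => ?_) _
    fun K hK => ?_
  · obtain ⟨hHQ, hH, hHM⟩ := (Set.Finite.mem_toFinset _).1 hH
    exact (Set.Finite.mem_toFinset _).2 ⟨inf_le_right, hinf H hHQ hH hHM⟩
  · refine le_trans ?_
      (ncard_setOf_inf_eq_le hp hMQ hQ hM ((Set.Finite.mem_toFinset _).1 hK).2)
    rw [Set.ncard_eq_toFinset_card]
    refine Finset.card_le_card fun H hH => ?_
    simp only [Finset.mem_filter, Set.Finite.mem_toFinset, Set.mem_ofPred_eq] at hH ⊢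
    exact ⟨hH.1.1, hH.1.2.1, hH.2⟩

theorem exists_le_card_eq_prime_pow (hp : p.Prime) {a b : ℕ} (hQ : Nat.card Q = p ^ b)
    (hab : a ≤ b) : ∃ M ≤ Q, Nat.card M = p ^ a := by
  have : Fact p.Prime := ⟨hp⟩
  obtain ⟨M, hM⟩ := Sylow.exists_subgroup_card_pow_prime (G := Q) p (hQ ▸ pow_dvd_pow p hab)
  exact ⟨M.map Q.subtype, map_subtype_le M, by
    rw [card_map_of_injective Q.subtype_injective, hM]⟩

/-- This is the recursion for Gaussian binomial coefficients: fix `M ≤ Q` of index `p` and split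
the subgroups according to whether they lie in `M`. -/
theorem ncard_setOf_le_card_eq_pow_le (hp : p.Prime) (k d : ℕ) {Q : Subgroup G}
    (hQ : Nat.card Q = p ^ (k + d)) :
    {H : Subgroup G | H ≤ Q ∧ Nat.card H = p ^ k}.ncard ≤ 2 ^ (k + d) * p ^ (k * d) := by
  match k, d with
  | 0, d =>
    have hsub : {H : Subgroup G | H ≤ Q ∧ Nat.card H = p ^ 0} ⊆ {⊥} :=
      fun H hH => card_eq_one.1 (hH.2.trans (pow_zero p))
    exact (Set.ncard_le_ncard hsub).trans (by simp [Nat.one_le_two_pow])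
  | k, 0 =>
    have hsub : {H : Subgroup G | H ≤ Q ∧ Nat.card H = p ^ k} ⊆ {Q} :=
      fun H hH => eq_of_le_of_card_ge hH.1 (hQ.trans hH.2.symm).le
    exact (Set.ncard_le_ncard hsub).trans (by simp [Nat.one_le_two_pow])
  | j + 1, e + 1 =>
    obtain ⟨M, hMQ, hM⟩ := exists_le_card_eq_prime_pow hp hQ (by lia : j + (e + 1) ≤ _)
    have hsub : {H : Subgroup G | H ≤ Q ∧ Nat.card H = p ^ (j + 1)} ⊆
        {H : Subgroup G | H ≤ M ∧ Nat.card H = p ^ (j + 1)} ∪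
          {H : Subgroup G | H ≤ Q ∧ Nat.card H = p ^ (j + 1) ∧ ¬ H ≤ M} := fun H hH =>
      (em (H ≤ M)).imp (fun h => ⟨h, hH.2⟩) (fun h => ⟨hH.1, hH.2, h⟩)
    have hle := ncard_setOf_le_card_eq_pow_le hp (j + 1) e (Q := M) (by rw [hM]; congr 1; lia)
    have hnot_le := (ncard_setOf_not_le_le hp hMQ hQ hM).trans
      (Nat.mul_le_mul_left _ (ncard_setOf_le_card_eq_pow_le hp j (e + 1) hM))
    calc _ ≤ _ := (Set.ncard_le_ncard hsub).trans (Set.ncard_union_le _ _)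
      _ ≤ 2 ^ (j + 1 + e) * p ^ ((j + 1) * e) +
            p ^ (e + 1) * (2 ^ (j + (e + 1)) * p ^ (j * (e + 1))) := add_le_add hle hnot_le
      _ ≤ 2 ^ (j + 1 + e) * p ^ ((j + 1) * (e + 1)) +
            p ^ (e + 1) * (2 ^ (j + (e + 1)) * p ^ (j * (e + 1))) := by
          gcongr
          exacts [hp.pos, e.le_succ]
      _ = 2 ^ (j + 1 + (e + 1)) * p ^ ((j + 1) * (e + 1)) := by ring
termination_by k + d

theorem ncard_setOf_le_isPGroup_le (hp : p.Prime) {a : ℕ} (hQ : Nat.card Q = p ^ a) :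
    {H : Subgroup G | H ≤ Q ∧ IsPGroup p H}.ncard ≤ 4 ^ a * p ^ (a ^ 2 / 4) := by
  have : Fact p.Prime := ⟨hp⟩
  have hsub : {H : Subgroup G | H ≤ Q ∧ IsPGroup p H} ⊆
      ⋃ k ∈ Finset.range (a + 1), {H : Subgroup G | H ≤ Q ∧ Nat.card H = p ^ k} := by
    rintro H ⟨hHQ, hH⟩
    obtain ⟨k, hk⟩ := IsPGroup.iff_card.1 hH
    have hka : k ≤ a := (Nat.pow_le_pow_iff_right hp.one_lt).1 (hk ▸ hQ ▸ card_le_of_le hHQ)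
    exact Set.mem_biUnion (Finset.mem_range_succ_iff.2 hka) ⟨hHQ, hk⟩
  refine (Set.ncard_le_ncard hsub).trans ((Finset.set_ncard_biUnion_le _ _).trans ?_)
  have hterm : ∀ k ∈ Finset.range (a + 1),
      {H : Subgroup G | H ≤ Q ∧ Nat.card H = p ^ k}.ncard ≤ 2 ^ a * p ^ (a ^ 2 / 4) := by
    intro k hk
    obtain ⟨d, rfl⟩ := Nat.exists_eq_add_of_le (Finset.mem_range_succ_iff.1 hk)
    refine (ncard_setOf_le_card_eq_pow_le hp k d hQ).trans ?_
    gcongr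
    · exact hp.pos
    · exact (Nat.le_div_iff_mul_le four_pos).2 (by linarith [four_mul_le_sq_add k d])
  calc _ ≤ ∑ _k ∈ Finset.range (a + 1), 2 ^ a * p ^ (a ^ 2 / 4) := Finset.sum_le_sum hterm
    _ = (a + 1) * (2 ^ a * p ^ (a ^ 2 / 4)) := by simp
    _ ≤ 2 ^ a * (2 ^ a * p ^ (a ^ 2 / 4)) := by gcongr; exact Nat.lt_two_pow_self
    _ = 4 ^ a * p ^ (a ^ 2 / 4) := by norm_num [← mul_assoc, ← mul_pow]

/-- An upper bound for the number of `p`-subgroups of a group of order `N`: there are at most `N`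
Sylow subgroups, and if these have order `p ^ a`, each of them has at most `4 ^ a * p ^ (a ^ 2 / 4)`
subgroups. -/
def pSubgroupBound (p N : ℕ) : ℕ :=
  N * (4 ^ N.factorization p * p ^ (N.factorization p ^ 2 / 4))

theorem ncard_setOf_isPGroup_le (hp : p.Prime) (G : Type*) [Group G] [Finite G] :
    {H : Subgroup G | IsPGroup p H}.ncard ≤ pSubgroupBound p (Nat.card G) := by
  have : Fact p.Prime := ⟨hp⟩
  have hsub : {H : Subgroup G | IsPGroup p H} ⊆
      ⋃ Q : Sylow p G, {H : Subgroup G | H ≤ Q ∧ IsPGroup p H} := by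
    intro H hH
    obtain ⟨Q, hHQ⟩ := IsPGroup.exists_le_sylow hH
    exact Set.mem_iUnion.2 ⟨Q, hHQ, hH⟩
  have hSylow : Nat.card (Sylow p G) ≤ Nat.card G := by
    obtain ⟨Q⟩ : Nonempty (Sylow p G) := inferInstance
    exact Nat.le_of_dvd Nat.card_pos (Q.card_dvd_index.trans (index_dvd_card _))
  have : Fintype (Sylow p G) := Fintype.ofFinite _
  set a := (Nat.card G).factorization p
  calc _ ≤ ∑ Q : Sylow p G, {H : Subgroup G | H ≤ Q ∧ IsPGroup p H}.ncard :=
        (Set.ncard_le_ncard hsub).trans (Set.ncard_iUnion_le_of_fintype _)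
    _ ≤ ∑ _Q : Sylow p G, 4 ^ a * p ^ (a ^ 2 / 4) := Finset.sum_le_sum fun Q _ =>
        ncard_setOf_le_isPGroup_le hp Q.card_eq_multiplicity
    _ = Nat.card (Sylow p G) * (4 ^ a * p ^ (a ^ 2 / 4)) := by simp
    _ ≤ pSubgroupBound p (Nat.card G) := Nat.mul_le_mul_right _ hSylow

end PGroupCount

section SubgroupCount

open Subgroup

variable {G : Type*} [Group G] [Finite G] {D r : ℕ}

theorem eq_top_of_index_mem_smoothNumbers {K : Subgroup G} (hK : K.index ∈ D.smoothNumbers)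
    (P : ∀ p : ℕ, Sylow p G) (hP : ∀ p ∈ D.primesBelow, (P p : Subgroup G) ≤ K) : K = ⊤ := by
  rw [← index_eq_one]
  by_contra hne
  obtain ⟨q, hq, hqK⟩ := Nat.exists_prime_and_dvd hne
  have : Fact q.Prime := ⟨hq⟩
  have hqD : q < D := Nat.mem_smoothNumbers'.1 hK q hq hqK
  exact (P q).not_dvd_index
    (hqK.trans (index_dvd_of_le (hP q (Nat.mem_primesBelow.2 ⟨hqD, hq⟩))))

theorem IsSmoothlyGenerated.exists_iSup_sylow_sup_closure_eq_top (h : IsSmoothlyGenerated D r G) :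
    ∃ (P : ∀ p : ℕ, Sylow p G) (f : Fin r → G),
      (⨆ p : D.primesBelow, (P p : Subgroup G)) ⊔ closure (Set.range f) = ⊤ := by
  obtain ⟨X, hXr, hX⟩ := h
  obtain ⟨e⟩ : Nonempty (X ↪ Fin r) := Function.Embedding.nonempty_of_card_le (by simpa)
  set f : Fin r → G := Function.extend e Subtype.val 1
  have hXf : (X : Set G) ⊆ Set.range f := fun x hx =>
    ⟨e ⟨x, hx⟩, e.injective.extend_apply Subtype.val 1 ⟨x, hx⟩⟩
  let P : ∀ p : ℕ, Sylow p G := fun _ => default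
  refine ⟨P, f, eq_top_of_index_mem_smoothNumbers
    (Nat.mem_smoothNumbers_of_dvd hX (index_dvd_of_le ?_)) P fun p hp => ?_⟩
  · exact (closure_mono hXf).trans le_sup_right
  · exact le_sup_of_le_left (le_iSup (fun q : D.primesBelow => (P q : Subgroup G)) ⟨p, hp⟩)

theorem card_subgroup_le_of_isSmoothlyGenerated
    (h : ∀ H : Subgroup G, IsSmoothlyGenerated D r H) :
    Nat.card (Subgroup G) ≤
      (∏ p ∈ D.primesBelow, {H : Subgroup G | IsPGroup p H}.ncard) * Nat.card G ^ r := by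
  let Φ : ((p : D.primesBelow) → {H : Subgroup G | IsPGroup p H}) × (Fin r → G) → Subgroup G :=
    fun x => (⨆ p, (x.1 p : Subgroup G)) ⊔ closure (Set.range x.2)
  have hΦ : Function.Surjective Φ := by
    intro H
    obtain ⟨P, f, hPf⟩ := (h H).exists_iSup_sylow_sup_closure_eq_top
    refine ⟨⟨fun p => ⟨(P p : Subgroup H).map H.subtype, (P p).2.map _⟩, H.subtype ∘ f⟩, ?_⟩
    simp only [Φ, Set.range_comp, ← MonoidHom.map_closure, ← Subgroup.map_iSup, ← Subgroup.map_sup,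
      hPf, ← MonoidHom.range_eq_map, range_subtype]
  refine (Nat.card_le_card_of_surjective Φ hΦ).trans_eq ?_
  rw [Nat.card_prod, Nat.card_pi, Nat.card_fun, Nat.card_fin]
  exact congrArg (· * _) (Finset.prod_coe_sort _ fun p => {H : Subgroup G | IsPGroup p H}.ncard)

theorem card_subgroup_perm_le {n p : ℕ} (hp : p.Prime) (hp7 : 7 ≤ p) (hpD : 2 * p ≤ D)
    (hn : 2 * n ≤ p * (p - 1)) :
    Nat.card (Subgroup (Equiv.Perm (Fin n))) ≤
      (∏ q ∈ D.primesBelow, pSubgroupBound q n.factorial) *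
        n.factorial ^ generatorBound D (2 * p) n := by
  have hcard : Nat.card (Equiv.Perm (Fin n)) = n.factorial := by
    rw [Nat.card_perm, Nat.card_fin]
  refine (card_subgroup_le_of_isSmoothlyGenerated fun H =>
    generatedInDegree_generatorBound hp hp7 hpD hn H (Fin n) (Nat.card_fin n)
      .of_faithfulSMul).trans ?_
  rw [hcard]
  gcongr with q hq
  exact hcard ▸ ncard_setOf_isPGroup_le (Nat.prime_of_mem_primesBelow hq) _

end SubgroupCount

section Asymptotics

open Filter Real

theorem log_factorial_le (n : ℕ) : log n.factorial ≤ n * log n := by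
  rw [← log_pow]
  exact log_le_log (by positivity) (mod_cast Nat.factorial_le_pow n)

theorem factorization_factorial_sq_div_four_le {q : ℕ} (hq : q.Prime) (n : ℕ) :
    ((n.factorial.factorization q ^ 2 / 4 : ℕ) : ℝ) ≤ (n / ((q : ℝ) - 1)) ^ 2 / 4 := by
  have ha : ((n.factorial.factorization q : ℕ) : ℝ) ≤ n / ((q : ℝ) - 1) := by
    rw [← Nat.cast_pred hq.pos]
    exact (Nat.cast_le.2 (Nat.factorization_factorial_le_div_pred hq n)).trans Nat.cast_div_le
  calc ((n.factorial.factorization q ^ 2 / 4 : ℕ) : ℝ)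
      ≤ ((n.factorial.factorization q ^ 2 : ℕ) : ℝ) / 4 := mod_cast Nat.cast_div_le
    _ = ((n.factorial.factorization q : ℕ) : ℝ) ^ 2 / 4 := by rw [Nat.cast_pow]
    _ ≤ (n / ((q : ℝ) - 1)) ^ 2 / 4 := by gcongr

theorem log_pSubgroupBound_factorial_le {n q : ℕ} (hq : q.Prime) (hn : 1 ≤ log n) :
    log (pSubgroupBound q n.factorial) ≤
      3 * (n * log n) + (n : ℝ) ^ 2 / 4 * (log q / ((q : ℝ) - 1) ^ 2) := by
  have hq0 : (q : ℝ) ≠ 0 := mod_cast hq.ne_zero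
  have hlog4 : log 4 ≤ 2 := by
    have hlog2 : log 4 = 2 * log 2 := by
      rw [show (4 : ℝ) = 2 ^ 2 by norm_num, log_pow, Nat.cast_ofNat]
    linarith [log_two_lt_d9]
  have ha : ((n.factorial.factorization q : ℕ) : ℝ) ≤ n :=
    mod_cast (Nat.factorization_factorial_le_div_pred hq n).trans (Nat.div_le_self _ _)
  have h4 : (n.factorial.factorization q : ℕ) * log 4 ≤ 2 * (n * log n) := by
    calc (n.factorial.factorization q : ℕ) * log 4 ≤ n * 2 := by gcongr
      _ ≤ 2 * (n * log n) := by nlinarith [(Nat.cast_nonneg n : (0 : ℝ) ≤ n)]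
  have hq4 : (n.factorial.factorization q ^ 2 / 4 : ℕ) * log q ≤
      (n : ℝ) ^ 2 / 4 * (log q / ((q : ℝ) - 1) ^ 2) := by
    calc (n.factorial.factorization q ^ 2 / 4 : ℕ) * log q
        ≤ (n / ((q : ℝ) - 1)) ^ 2 / 4 * log q :=
          mul_le_mul_of_nonneg_right (factorization_factorial_sq_div_four_le hq n)
            (log_natCast_nonneg q)
      _ = (n : ℝ) ^ 2 / 4 * (log q / ((q : ℝ) - 1) ^ 2) := by
          rw [div_pow]
          ring
  rw [pSubgroupBound]
  push_cast
  rw [log_mul (by positivity) (by positivity), log_mul (by positivity) (by positivity), log_pow,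
    log_pow]
  linarith [log_factorial_le n]

theorem log_card_subgroup_perm_le {D n p : ℕ} (hp : p.Prime) (hp7 : 7 ≤ p) (hpD : 2 * p ≤ D)
    (hpn : 2 * n ≤ p * (p - 1)) (hn : 1 ≤ log n) :
    log (Nat.card (Subgroup (Equiv.Perm (Fin n)))) ≤
      (3 * D + generatorBound D (2 * p) n) * (n * log n) +
        (n : ℝ) ^ 2 / 4 * ∑ q ∈ D.primesBelow, log q / ((q : ℝ) - 1) ^ 2 := by
  have hne : ∀ q ∈ D.primesBelow, (pSubgroupBound q n.factorial : ℝ) ≠ 0 := fun q hq => by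
    have := (Nat.prime_of_mem_primesBelow hq).pos
    rw [pSubgroupBound]
    positivity
  have hcard : (D.primesBelow.card : ℝ) ≤ D :=
    mod_cast (Finset.card_filter_le _ _).trans_eq (Finset.card_range D)
  calc log (Nat.card (Subgroup (Equiv.Perm (Fin n))))
      ≤ ∑ q ∈ D.primesBelow, log (pSubgroupBound q n.factorial) +
          generatorBound D (2 * p) n * log n.factorial := by
        rw [← log_prod hne, ← log_pow,
          ← log_mul (Finset.prod_ne_zero_iff.2 hne) (by positivity)]
        exact log_le_log (mod_cast Nat.card_pos) (mod_cast card_subgroup_perm_le hp hp7 hpD hpn)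
    _ ≤ ∑ q ∈ D.primesBelow, (3 * (n * log n) + (n : ℝ) ^ 2 / 4 * (log q / ((q : ℝ) - 1) ^ 2)) +
          generatorBound D (2 * p) n * (n * log n) := by
        gcongr with q hq
        · exact log_pSubgroupBound_factorial_le (Nat.prime_of_mem_primesBelow hq) hn
        · exact log_factorial_le n
    _ = D.primesBelow.card * (3 * (n * log n)) + generatorBound D (2 * p) n * (n * log n) +
          (n : ℝ) ^ 2 / 4 * ∑ q ∈ D.primesBelow, log q / ((q : ℝ) - 1) ^ 2 := by
        rw [Finset.sum_add_distrib, Finset.sum_const, nsmul_eq_mul, Finset.mul_sum]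
        ring
    _ ≤ D * (3 * (n * log n)) + generatorBound D (2 * p) n * (n * log n) +
          (n : ℝ) ^ 2 / 4 * ∑ q ∈ D.primesBelow, log q / ((q : ℝ) - 1) ^ 2 := by gcongr
    _ = _ := by ring

/-- Balances the two error terms: `D = c ^ 3` primes and about `n c ^ 2 / D` generators. -/
theorem log_card_subgroup_perm_le_of_le_pow_four {c n : ℕ} (hc : 8 ≤ c) (hnc : n ≤ c ^ 4)
    (hn : 1 ≤ log n) :
    log (Nat.card (Subgroup (Equiv.Perm (Fin n)))) ≤ 35 * (c : ℝ) ^ 3 * (n * log n) +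
      (n : ℝ) ^ 2 / 4 * ∑ q ∈ (c ^ 3).primesBelow, log q / ((q : ℝ) - 1) ^ 2 := by
  have hc2 : 8 * 8 ≤ c ^ 2 := sq c ▸ Nat.mul_le_mul hc hc
  obtain ⟨p, hp, hcp, hpc⟩ := Nat.exists_prime_lt_and_le_two_mul (2 * c ^ 2) (by lia)
  have hpD : 2 * p ≤ c ^ 3 := by
    calc 2 * p ≤ 8 * c ^ 2 := by lia
      _ ≤ c * c ^ 2 := by gcongr
      _ = c ^ 3 := by ring
  have hpn : 2 * n ≤ p * (p - 1) := by
    calc 2 * n ≤ 2 * c ^ 4 := by gcongr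
      _ ≤ 2 * c ^ 2 * (2 * c ^ 2) := by nlinarith
      _ ≤ p * (p - 1) := Nat.mul_le_mul hcp.le (by lia)
  have hgen : generatorBound (c ^ 3) (2 * p) n ≤ 32 * c ^ 3 := by
    refine Nat.le_of_mul_le_mul_right (c := c ^ 3) ?_ (by positivity)
    calc generatorBound (c ^ 3) (2 * p) n * c ^ 3 ≤ 4 * (2 * p) * n := generatorBound_mul_le
      _ ≤ 4 * (2 * (2 * (2 * c ^ 2))) * c ^ 4 := by gcongr
      _ = 32 * c ^ 3 * c ^ 3 := by ring
  refine (log_card_subgroup_perm_le hp (by lia) hpD hpn hn).trans ?_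
  gcongr
  calc (3 * (c ^ 3 : ℕ) + generatorBound (c ^ 3) (2 * p) n : ℝ)
      ≤ 3 * (c ^ 3 : ℕ) + (32 * c ^ 3 : ℕ) := by gcongr
    _ = 35 * (c : ℝ) ^ 3 := by push_cast; ring

theorem eventually_log_card_subgroup_perm_le {C ε : ℝ} (hε : 0 < ε)
    (hC : ∀ D : ℕ, ∑ q ∈ D.primesBelow, log q / ((q : ℝ) - 1) ^ 2 ≤ C) :
    ∀ᶠ n : ℕ in atTop,
      log (Nat.card (Subgroup (Equiv.Perm (Fin n)))) ≤ (C / 4 + ε) * (n : ℝ) ^ 2 := by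
  have hlog : ∀ᶠ n : ℕ in atTop, log n ≤ ε / 280 * (n : ℝ) ^ (1 / 4 : ℝ) := by
    filter_upwards [tendsto_natCast_atTop_atTop.eventually
      ((isLittleO_log_rpow_atTop (show (0 : ℝ) < 1 / 4 by norm_num)).def
        (show 0 < ε / 280 by positivity))] with n hn
    rw [norm_of_nonneg (by positivity : (0 : ℝ) ≤ (n : ℝ) ^ (1 / 4 : ℝ))] at hn
    exact (le_norm_self _).trans hn
  have hroot : ∀ᶠ n : ℕ in atTop, (8 : ℝ) ≤ (n : ℝ) ^ (1 / 4 : ℝ) :=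
    ((tendsto_rpow_atTop (by norm_num)).comp tendsto_natCast_atTop_atTop).eventually_ge_atTop 8
  have hlog1 : ∀ᶠ n : ℕ in atTop, 1 ≤ log n :=
    (tendsto_log_atTop.comp tendsto_natCast_atTop_atTop).eventually_ge_atTop 1
  filter_upwards [hlog, hroot, hlog1] with n hlog hroot hlog1
  set x : ℝ := (n : ℝ) ^ (1 / 4 : ℝ)
  have hx : (n : ℝ) = x ^ 4 := by
    rw [← rpow_natCast, ← rpow_mul n.cast_nonneg]
    norm_num
  have hxc : x ≤ ⌈x⌉₊ := Nat.le_ceil x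
  have hcx : (⌈x⌉₊ : ℝ) ≤ 2 * x := by linarith [Nat.ceil_lt_add_one (by positivity : 0 ≤ x)]
  have hc : 8 ≤ ⌈x⌉₊ := mod_cast hroot.trans hxc
  have hnc : n ≤ ⌈x⌉₊ ^ 4 := by
    rw [← Nat.cast_le (α := ℝ), Nat.cast_pow, hx]
    gcongr
  calc log (Nat.card (Subgroup (Equiv.Perm (Fin n))))
      ≤ 35 * (⌈x⌉₊ : ℝ) ^ 3 * (n * log n) + (n : ℝ) ^ 2 / 4 * C :=
        (log_card_subgroup_perm_le_of_le_pow_four hc hnc hlog1).trans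
          (by gcongr; exact hC _)
    _ ≤ 35 * (2 * x) ^ 3 * (n * (ε / 280 * x)) + (n : ℝ) ^ 2 / 4 * C := by gcongr
    _ = (C / 4 + ε) * (n : ℝ) ^ 2 := by
        rw [hx]
        ring

theorem sum_log_div_sub_one_sq_le {N : ℕ} (hN : 4 ≤ N) :
    ∑ q ∈ Finset.Ico 4 N, log q / ((q : ℝ) - 1) ^ 2 ≤
      log 2 + 1 / 3 - (log N / ((N : ℝ) - 2) + 1 / ((N : ℝ) - 1)) := by
  induction N, hN using Nat.le_induction with
  | base =>
    rw [Finset.Ico_self, Finset.sum_empty, Nat.cast_ofNat, show (4 : ℝ) = 2 ^ 2 by norm_num,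
      log_pow]
    norm_num
  | succ N hN ih =>
    rw [Finset.sum_Ico_succ_top hN]
    have hN4 : (4 : ℝ) ≤ N := mod_cast hN
    have hN1 : (0 : ℝ) < (N : ℝ) - 1 := by linarith
    have hN2 : (0 : ℝ) < (N : ℝ) - 2 := by linarith
    have hlog : log (N + 1) ≤ log N + 1 / N := by
      have := log_le_sub_one_of_pos (show (0 : ℝ) < (N + 1) / N by positivity)
      rw [log_div (by positivity) (by positivity), add_div, div_self (by positivity)] at this
      linarith
    have hfrac : (N : ℝ) / (N - 1) ^ 2 ≤ 1 / (N - 2) := by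
      rw [div_le_div_iff₀ (by positivity) hN2]
      nlinarith
    have hstep : log N / ((N : ℝ) - 1) ^ 2 + (log (N + 1) / ((N : ℝ) - 1) + 1 / N) ≤
        log N / ((N : ℝ) - 2) + 1 / ((N : ℝ) - 1) := by
      calc log N / ((N : ℝ) - 1) ^ 2 + (log (N + 1) / ((N : ℝ) - 1) + 1 / N)
          ≤ log N / ((N : ℝ) - 1) ^ 2 + ((log N + 1 / N) / ((N : ℝ) - 1) + 1 / N) := by gcongr
        _ = log N * (N / (N - 1) ^ 2) + 1 / ((N : ℝ) - 1) := by field_simp; ring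
        _ ≤ log N * (1 / (N - 2)) + 1 / ((N : ℝ) - 1) :=
            add_le_add_left (mul_le_mul_of_nonneg_left hfrac (log_natCast_nonneg N)) _
        _ = _ := by rw [mul_one_div]
    push_cast
    rw [show (N : ℝ) + 1 - 2 = N - 1 by ring, add_sub_cancel_right]
    linarith

theorem sum_primesBelow_log_div_sub_one_sq_le (D : ℕ) :
    ∑ q ∈ D.primesBelow, log q / ((q : ℝ) - 1) ^ 2 ≤ 2 / 3 * log 24 := by
  have hsub : D.primesBelow ⊆ {2, 3} ∪ Finset.Ico 4 (D + 4) := by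
    intro q hq
    obtain ⟨hqD, hq⟩ := Nat.mem_primesBelow.1 hq
    simp only [Finset.mem_union, Finset.mem_insert, Finset.mem_singleton, Finset.mem_Ico]
    have := hq.two_le
    lia
  have hdisj : Disjoint ({2, 3} : Finset ℕ) (Finset.Ico 4 (D + 4)) := by
    simp [Finset.disjoint_left]
  have htail : ∑ q ∈ Finset.Ico 4 (D + 4), log q / ((q : ℝ) - 1) ^ 2 ≤ log 2 + 1 / 3 := by
    refine (sum_log_div_sub_one_sq_le (by lia)).trans (sub_le_self _ ?_)
    push_cast
    have hlog : 0 ≤ log ((D : ℝ) + 4) := log_nonneg (by linarith [D.cast_nonneg (α := ℝ)])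
    have h2 : (0 : ℝ) ≤ D + 4 - 2 := by linarith [D.cast_nonneg (α := ℝ)]
    have h1 : (0 : ℝ) ≤ D + 4 - 1 := by linarith
    positivity
  have hlog3 : 1 ≤ log 3 := by
    rw [le_log_iff_exp_le (by norm_num)]
    exact exp_one_lt_three.le
  have hlog24 : log 24 = 3 * log 2 + log 3 := by
    rw [show (24 : ℝ) = 2 ^ 3 * 3 by norm_num, log_mul (by norm_num) (by norm_num), log_pow]
    norm_num
  calc ∑ q ∈ D.primesBelow, log q / ((q : ℝ) - 1) ^ 2
      ≤ ∑ q ∈ {2, 3} ∪ Finset.Ico 4 (D + 4), log q / ((q : ℝ) - 1) ^ 2 :=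
        Finset.sum_le_sum_of_subset_of_nonneg hsub fun q _ _ =>
          div_nonneg (log_natCast_nonneg q) (sq_nonneg _)
    _ ≤ log 2 + log 3 / 4 + (log 2 + 1 / 3) := by
        rw [Finset.sum_union hdisj]
        refine add_le_add (le_of_eq ?_) htail
        norm_num
    _ ≤ 2 / 3 * log 24 := by linarith

end Asymptotics

/-- (Pyber) The number of subgroups of the symmetric group on `n` points is at most
`24 ^ ((1/6 + ε) n²)` for all sufficiently large `n`. -/
theorem pyber_subgroup_count (ε : ℝ) (hε : 0 < ε) :
    ∃ N : ℕ, ∀ n : ℕ, N ≤ n →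
      (Nat.card (Subgroup (Equiv.Perm (Fin n))) : ℝ) ≤
        (24 : ℝ) ^ ((1 / 6 + ε) * (n : ℝ) ^ 2) := by
  have hlog24 : 0 < Real.log 24 := Real.log_pos (by norm_num)
  obtain ⟨N, hN⟩ := Filter.eventually_atTop.1 (eventually_log_card_subgroup_perm_le
    (mul_pos hε hlog24) sum_primesBelow_log_div_sub_one_sq_le)
  refine ⟨N, fun n hn => ?_⟩
  rw [← Real.log_le_log_iff (mod_cast Nat.card_pos) (by positivity), Real.log_rpow (by norm_num)]
  exact (hN n hn).trans_eq (by ring)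
end
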